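/- arXiv:1406.5877 — 2 statements merged into one kernel-verified Lean document; each statement's English description precedes it below -/
import Mathlib

section
/- Sufficiency of the Helmholtz-type conditions (21): let (A, B, c) be a triple as in the context, smooth on an open subset Ω ⊆ ℝ × ℝ^q × ℝ^q (coordinates (t,x,v)), with A skew-symmetric, satisfying conditions (21), and let E be the associated third-order expression (20). Then E is locally variational: every point of Ω × ℝ^q (coordinates (t,x,v,v′)) has an open neighborhood U and a smooth function L = L(t,x,v,v′) defined on U such that for every smooth curve c : I → ℝ^q whose prolongation t ↦ (t, c(t), ċ(t), c̈(t)) lies in U, the Euler–Poisson expressions of L satisfy E_a[L,c](t) = E_a(t, c(t), ċ(t), c̈(t), c⃛(t)) for all a = 1,…,q and all t ∈ I. -/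
noncomputable section

/-- Partial derivative in `t` of a function `F(t,x,v)` on `ℝ × ℝ^q × ℝ^q`. -/
def pdt {q : ℕ} (F : ℝ → (Fin q → ℝ) → (Fin q → ℝ) → ℝ)
    (t : ℝ) (x v : Fin q → ℝ) : ℝ :=
  deriv (fun s => F s x v) t

/-- Partial derivative in `x^a` of a function `F(t,x,v)`. -/
def pdx {q : ℕ} (a : Fin q) (F : ℝ → (Fin q → ℝ) → (Fin q → ℝ) → ℝ)
    (t : ℝ) (x v : Fin q → ℝ) : ℝ :=
  deriv (fun s : ℝ => F t (x + s • (Pi.single a 1 : Fin q → ℝ)) v) 0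

/-- Partial derivative in `v^a` of a function `F(t,x,v)`. -/
def pdv {q : ℕ} (a : Fin q) (F : ℝ → (Fin q → ℝ) → (Fin q → ℝ) → ℝ)
    (t : ℝ) (x v : Fin q → ℝ) : ℝ :=
  deriv (fun s : ℝ => F t x (v + s • (Pi.single a 1 : Fin q → ℝ))) 0

/-- The total-derivative operator `D₁ = ∂_t + v^a ∂_{x^a}`. -/
def D1 {q : ℕ} (F : ℝ → (Fin q → ℝ) → (Fin q → ℝ) → ℝ) :
    ℝ → (Fin q → ℝ) → (Fin q → ℝ) → ℝ :=
  fun t x v => pdt F t x v + ∑ a, v a * pdx a F t x v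

/-- Partial derivative in `x^a` of a Lagrange function `L(t,x,v,v′)`. -/
def pLx {q : ℕ} (a : Fin q) (L : ℝ → (Fin q → ℝ) → (Fin q → ℝ) → (Fin q → ℝ) → ℝ)
    (t : ℝ) (x v w : Fin q → ℝ) : ℝ :=
  deriv (fun s : ℝ => L t (x + s • (Pi.single a 1 : Fin q → ℝ)) v w) 0

/-- Partial derivative in `v^a` of a Lagrange function `L(t,x,v,v′)`. -/
def pLv {q : ℕ} (a : Fin q) (L : ℝ → (Fin q → ℝ) → (Fin q → ℝ) → (Fin q → ℝ) → ℝ)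
    (t : ℝ) (x v w : Fin q → ℝ) : ℝ :=
  deriv (fun s : ℝ => L t x (v + s • (Pi.single a 1 : Fin q → ℝ)) w) 0

/-- Partial derivative in `v′^a` of a Lagrange function `L(t,x,v,v′)`. -/
def pLw {q : ℕ} (a : Fin q) (L : ℝ → (Fin q → ℝ) → (Fin q → ℝ) → (Fin q → ℝ) → ℝ)
    (t : ℝ) (x v w : Fin q → ℝ) : ℝ :=
  deriv (fun s : ℝ => L t x v (w + s • (Pi.single a 1 : Fin q → ℝ))) 0

/-- The Euler–Poisson (Euler–Lagrange) expressions
`E_a[L,c](t) = ∂L/∂x^a − (d/dt)(∂L/∂v^a) + (d²/dt²)(∂L/∂v′^a)` of a second-order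
Lagrange function `L(t,x,v,v′)` along a curve `c`, all partial derivatives evaluated
along the prolonged curve `t ↦ (t, c(t), ċ(t), c̈(t))`. -/
def eulerPoisson {q : ℕ} (L : ℝ → (Fin q → ℝ) → (Fin q → ℝ) → (Fin q → ℝ) → ℝ)
    (c : ℝ → (Fin q → ℝ)) (t : ℝ) (a : Fin q) : ℝ :=
  pLx a L t (c t) (deriv c t) (deriv (deriv c) t)
    - deriv (fun τ => pLv a L τ (c τ) (deriv c τ) (deriv (deriv c) τ)) t
    + deriv (deriv (fun τ => pLw a L τ (c τ) (deriv c τ) (deriv (deriv c) τ))) t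

/-- The third-order expression (20):
`E_a = A_{ab} v″^b + v′^c (∂A_{ab}/∂v^c) v′^b + B_{ab} v′^b + c_a`. -/
def expr20 {q : ℕ} (A B : Fin q → Fin q → ℝ → (Fin q → ℝ) → (Fin q → ℝ) → ℝ)
    (cc : Fin q → ℝ → (Fin q → ℝ) → (Fin q → ℝ) → ℝ)
    (a : Fin q) (t : ℝ) (x v v' v'' : Fin q → ℝ) : ℝ :=
  (∑ b, A a b t x v * v'' b)
    + (∑ c, ∑ b, v' c * pdv c (A a b) t x v * v' b)
    + (∑ b, B a b t x v * v' b) + cc a t x v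

/-- The Helmholtz-type conditions (21) on a triple `(A,B,c)`, imposed at every point of
a set `Ω ⊆ ℝ × ℝ^q × ℝ^q`.  Square (round) brackets in the paper denote
antisymmetrization (symmetrization) with weight `1/k!`, written out explicitly here. -/
def cond21On {q : ℕ} (Ω : Set (ℝ × (Fin q → ℝ) × (Fin q → ℝ)))
    (A B : Fin q → Fin q → ℝ → (Fin q → ℝ) → (Fin q → ℝ) → ℝ)
    (cc : Fin q → ℝ → (Fin q → ℝ) → (Fin q → ℝ) → ℝ) : Prop :=
  ∀ p ∈ Ω, ∀ a b c : Fin q,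
    -- (i)  ∂_{v^{[a}} A_{bc]} = 0
    (pdv a (A b c) p.1 p.2.1 p.2.2 - pdv b (A a c) p.1 p.2.1 p.2.2
      - pdv c (A b a) p.1 p.2.1 p.2.2 - pdv a (A c b) p.1 p.2.1 p.2.2
      + pdv b (A c a) p.1 p.2.1 p.2.2 + pdv c (A a b) p.1 p.2.1 p.2.2) / 6 = 0 ∧
    -- (ii)  2 B_{[ab]} − 3 D₁ A_{ab} = 0
    2 * ((B a b p.1 p.2.1 p.2.2 - B b a p.1 p.2.1 p.2.2) / 2)
      - 3 * D1 (A a b) p.1 p.2.1 p.2.2 = 0 ∧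
    -- (iii)  2 ∂_{v^{[a}} B_{b]c} − 4 ∂_{x^{[a}} A_{b]c} + ∂_{x^c} A_{ab}
    --        + 2 D₁ ∂_{v^c} A_{ab} = 0
    2 * ((pdv a (B b c) p.1 p.2.1 p.2.2 - pdv b (B a c) p.1 p.2.1 p.2.2) / 2)
      - 4 * ((pdx a (A b c) p.1 p.2.1 p.2.2 - pdx b (A a c) p.1 p.2.1 p.2.2) / 2)
      + pdx c (A a b) p.1 p.2.1 p.2.2
      + 2 * D1 (pdv c (A a b)) p.1 p.2.1 p.2.2 = 0 ∧
    -- (iv)  ∂_{v^{(a}} c_{b)} − D₁ B_{(ab)} = 0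
    (pdv a (cc b) p.1 p.2.1 p.2.2 + pdv b (cc a) p.1 p.2.1 p.2.2) / 2
      - D1 (fun t x v => (B a b t x v + B b a t x v) / 2) p.1 p.2.1 p.2.2 = 0 ∧
    -- (v)  2 ∂_{v^c} ∂_{v^{[a}} c_{b]} − 4 ∂_{x^{[a}} B_{b]c} + D₁² ∂_{v^c} A_{ab}
    --      + 6 D₁ ∂_{x^{[a}} A_{bc]} = 0
    2 * pdv c (fun t x v => (pdv a (cc b) t x v - pdv b (cc a) t x v) / 2)
          p.1 p.2.1 p.2.2
      - 4 * ((pdx a (B b c) p.1 p.2.1 p.2.2 - pdx b (B a c) p.1 p.2.1 p.2.2) / 2)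
      + D1 (D1 (pdv c (A a b))) p.1 p.2.1 p.2.2
      + 6 * D1 (fun t x v =>
          (pdx a (A b c) t x v - pdx b (A a c) t x v - pdx c (A b a) t x v
            - pdx a (A c b) t x v + pdx b (A c a) t x v + pdx c (A a b) t x v) / 6)
          p.1 p.2.1 p.2.2 = 0 ∧
    -- (vi)  4 ∂_{x^{[a}} c_{b]} − 2 D₁ ∂_{v^{[a}} c_{b]} − D₁³ A_{ab} = 0
    4 * ((pdx a (cc b) p.1 p.2.1 p.2.2 - pdx b (cc a) p.1 p.2.1 p.2.2) / 2)
      - 2 * D1 (fun t x v => (pdv a (cc b) t x v - pdv b (cc a) t x v) / 2)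
          p.1 p.2.1 p.2.2
      - D1 (D1 (D1 (A a b))) p.1 p.2.1 p.2.2 = 0

end

/-!
A Lagrangian `α_b v'^b + H` affine in `v'` has a third-order Euler–Poisson expression of the form
(20), whose coefficients satisfy (21) because the operators `∂_{x^a}`, `∂_{v^a}` and `D₁` commute
except for `[∂_{v^a}, D₁] = ∂_{x^a}`. Conversely, given a solution of (21), the coefficient `A` is a
closed 2-form in `v`, so the Poincaré lemma gives an `α` with the same `A`. Subtracting leaves a
solution with `A = 0`, in which `B` is symmetric with `∂_{v^a} B_{bd}` totally symmetric, hence a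
Hessian in `v`; subtracting again leaves `c` alone, which is then affine in `v` and satisfies the
classical Helmholtz conditions, so that Tonti's homotopy formula gives the rest of `H`. The
homotopies for the three steps must exist on a common neighbourhood: a contraction onto the uniform
motion through the base point commutes with `D₁`, and a neighbourhood of cylinder shape, adapted to
that motion, is stable under it as well as under the contraction in `v`.
-/

open scoped ContDiff Topology
open TopologicalSpace (Opens)

namespace Helmholtz

noncomputable section

/-! ### Integrals with smooth parameters -/

section ParametricIntegral

open scoped Interval

variable {E G : Type*} [NormedAddCommGroup E] [NormedSpace ℝ E]
  [NormedAddCommGroup G] [NormedSpace ℝ G] {O : Set (E × ℝ)} {F : E × ℝ → G} {a b : ℝ}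

theorem hasFDerivAt_intervalIntegral_of_contDiffOn (hO : IsOpen O) (hF : ContDiffOn ℝ 1 F O)
    {p : E} (hp : ∀ s ∈ [[a, b]], (p, s) ∈ O) :
    HasFDerivAt (fun x => ∫ s in a..b, F (x, s))
      (∫ s in a..b, (fderiv ℝ F (p, s)).comp (.inl ℝ E ℝ)) p := by
  set F' : E × ℝ → E →L[ℝ] G := fun z => (fderiv ℝ F z).comp (.inl ℝ E ℝ)
  have hF' : ContinuousOn F' O :=
    (hF.continuousOn_fderiv_of_isOpen hO le_rfl).clm_comp continuousOn_const
  have hsegment : {p} ×ˢ [[a, b]] ⊆ O := by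
    rintro ⟨x, s⟩ ⟨rfl, hs⟩
    exact hp s hs
  have hcompact : IsCompact ({p} ×ˢ [[a, b]]) := isCompact_singleton.prod isCompact_uIcc
  obtain ⟨N, hsegmentN, hN, hbdd⟩ :=
    Metric.exists_isOpen_isBounded_image_of_isCompact_of_continuousOn hcompact hO hsegment hF'
  obtain ⟨C, hC⟩ := hbdd.exists_norm_le
  obtain ⟨u, v, hu, -, hpu, hv, huv⟩ := generalized_tube_lemma isCompact_singleton
    isCompact_uIcc (hO.inter hN) (Set.subset_inter hsegment hsegmentN)
  have hmem {x : E} {s : ℝ} (hx : x ∈ u) (hs : s ∈ [[a, b]]) : (x, s) ∈ O ∩ N :=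
    huv ⟨hx, hv hs⟩
  have hmaps {x : E} (hx : x ∈ u) : Set.MapsTo (fun s => (x, s)) [[a, b]] O :=
    fun s hs => (hmem hx hs).1
  have hslice {x : E} (hx : x ∈ u) : ContinuousOn (fun s => F (x, s)) [[a, b]] :=
    hF.continuousOn.comp (by fun_prop) (hmaps hx)
  have hpu : p ∈ u := hpu rfl
  refine intervalIntegral.hasFDerivAt_integral_of_dominated_of_fderiv_le
    (F' := fun x s => F' (x, s)) (bound := fun _ => C) (hu.mem_nhds hpu) ?_
    (hslice hpu).intervalIntegrable ?_ ?_ intervalIntegrable_const ?_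
  · filter_upwards [hu.mem_nhds hpu] with x hx
    exact ((hslice hx).mono Set.uIoc_subset_uIcc).aestronglyMeasurable measurableSet_uIoc
  · have hslice' : ContinuousOn (fun s => F' (p, s)) [[a, b]] :=
      hF'.comp (by fun_prop) (hmaps hpu)
    exact (hslice'.mono Set.uIoc_subset_uIcc).aestronglyMeasurable measurableSet_uIoc
  · filter_upwards with s hs x hx
    exact hC _ ⟨(x, s), (hmem hx (Set.uIoc_subset_uIcc hs)).2, rfl⟩
  · filter_upwards with s hs x hx
    have hxs : O ∈ 𝓝 (x, s) := hO.mem_nhds (hmaps hx (Set.uIoc_subset_uIcc hs))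
    exact ((hF.differentiableOn one_ne_zero).differentiableAt hxs).hasFDerivAt.comp x
      (hasFDerivAt_prodMk_left x s)

theorem fderiv_intervalIntegral_apply (hO : IsOpen O) (hF : ContDiffOn ℝ 1 F O)
    {p : E} (hp : ∀ s ∈ [[a, b]], (p, s) ∈ O) (w : E) :
    fderiv ℝ (fun x => ∫ s in a..b, F (x, s)) p w
      = ∫ s in a..b, fderiv ℝ F (p, s) (w, 0) := by
  rw [(hasFDerivAt_intervalIntegral_of_contDiffOn hO hF hp).fderiv]
  refine (ContinuousLinearMap.intervalIntegral_apply
    (ContinuousOn.intervalIntegrable ?_) w).trans ?_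
  · exact ((hF.continuousOn_fderiv_of_isOpen hO le_rfl).clm_comp continuousOn_const).comp
      (by fun_prop) hp
  · simp only [ContinuousLinearMap.comp_apply, ContinuousLinearMap.inl_apply]

theorem contDiffOn_intervalIntegral [FiniteDimensional ℝ E] (hO : IsOpen O)
    (hF : ContDiffOn ℝ ∞ F O) {W : Set E} (hW : IsOpen W) (hWO : W ×ˢ [[a, b]] ⊆ O) :
    ContDiffOn ℝ ∞ (fun x => ∫ s in a..b, F (x, s)) W := by
  refine contDiffOn_infty.2 fun n => ?_
  induction n generalizing F with
  | zero =>
    exact contDiffOn_zero.2 fun p hp => (hasFDerivAt_intervalIntegral_of_contDiffOn hO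
      (hF.of_le (by simp)) fun s hs => hWO ⟨hp, hs⟩).continuousAt.continuousWithinAt
  | succ n ih =>
    have hF1 : ContDiffOn ℝ 1 F O := hF.of_le (by simp)
    have hmem {p : E} (hp : p ∈ W) : ∀ s ∈ [[a, b]], (p, s) ∈ O := fun s hs => hWO ⟨hp, hs⟩
    rw [Nat.cast_succ]
    refine contDiffOn_succ_of_fderiv_apply (fun p hp =>
      (hasFDerivAt_intervalIntegral_of_contDiffOn hO hF1
        (hmem hp)).differentiableAt.differentiableWithinAt) (by simp) fun w => ?_
    have hF' : ContDiffOn ℝ ∞ (fun z => fderiv ℝ F z (w, 0)) O :=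
      (hF.fderiv_of_isOpen hO (by simp)).clm_apply contDiffOn_const
    refine (ih hF').congr fun p hp => ?_
    rw [fderivWithin_of_isOpen hW hp, fderiv_intervalIntegral_apply hO hF1 (hmem hp)]

end ParametricIntegral

/-! ### Smooth functions on an open set -/

section SmoothFun

variable {E : Type*} [NormedAddCommGroup E] [NormedSpace ℝ E] {W : Opens E}

/-- The smooth real functions on the open set `W`, as functions on the subtype `W`, so that
identities between them are equalities rather than equalities on `W`. -/
def smoothSubalgebra (W : Opens E) : Subalgebra ℝ (W → ℝ) where
  carrier := {f | ∃ g : E → ℝ, ContDiffOn ℝ ∞ g W ∧ ∀ p : W, g p = f p}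
  mul_mem' := by
    rintro _ _ ⟨g, hg, hgf⟩ ⟨g', hg', hgf'⟩
    exact ⟨g * g', hg.mul hg', fun p => congr_arg₂ (· * ·) (hgf p) (hgf' p)⟩
  add_mem' := by
    rintro _ _ ⟨g, hg, hgf⟩ ⟨g', hg', hgf'⟩
    exact ⟨g + g', hg.add hg', fun p => congr_arg₂ (· + ·) (hgf p) (hgf' p)⟩
  algebraMap_mem' r := ⟨fun _ => r, contDiffOn_const, fun _ => rfl⟩

/-- The algebra of smooth real functions on the open set `W`. -/
abbrev SmoothFun (W : Opens E) : Type _ := smoothSubalgebra W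

namespace SmoothFun

/-- The restriction to `W` of a function smooth on `W`. -/
def restrict (g : E → ℝ) (hg : ContDiffOn ℝ ∞ g W) : SmoothFun W :=
  ⟨fun p => g p, g, hg, fun _ => rfl⟩

/-- The extension of a smooth function on `W` by zero, so that it can be differentiated in `E`. -/
def extend (F : SmoothFun W) : E → ℝ := Function.extend (↑) F.1 0

theorem extend_apply (F : SmoothFun W) (p : W) : F.extend p = F.1 p :=
  Subtype.val_injective.extend_apply F.1 0 p

theorem contDiffOn_extend (F : SmoothFun W) : ContDiffOn ℝ ∞ F.extend W := by
  obtain ⟨g, hg, hgF⟩ := F.2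
  exact hg.congr fun p hp => (F.extend_apply ⟨p, hp⟩).trans (hgF ⟨p, hp⟩).symm

theorem contDiffAt_extend (F : SmoothFun W) {p : E} (hp : p ∈ W) : ContDiffAt ℝ ∞ F.extend p :=
  F.contDiffOn_extend.contDiffAt (W.isOpen.mem_nhds hp)

theorem differentiableAt_extend (F : SmoothFun W) {p : E} (hp : p ∈ W) :
    DifferentiableAt ℝ F.extend p :=
  (F.contDiffAt_extend hp).differentiableAt (by simp)

theorem extend_eventuallyEq {F : SmoothFun W} {g : E → ℝ} (h : ∀ p : W, g p = F.1 p) {p : E}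
    (hp : p ∈ W) : F.extend =ᶠ[𝓝 p] g := by
  filter_upwards [W.isOpen.mem_nhds hp] with y hy
  rw [h ⟨y, hy⟩, F.extend_apply ⟨y, hy⟩]

end SmoothFun

open SmoothFun

theorem contDiffOn_fderiv_extend_apply {w : E → E} (hw : ContDiff ℝ ∞ w) (F : SmoothFun W) :
    ContDiffOn ℝ ∞ (fun p => fderiv ℝ F.extend p (w p)) W :=
  (F.contDiffOn_extend.fderiv_of_isOpen W.isOpen (by simp)).clm_apply hw.contDiffOn

/-- Differentiation of smooth functions along a vector field `w`. -/
def lieDeriv (w : E → E) (hw : ContDiff ℝ ∞ w) : Derivation ℝ (SmoothFun W) (SmoothFun W) :=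
  .mk'
    { toFun F := restrict _ (contDiffOn_fderiv_extend_apply hw F)
      map_add' F G := by
        ext p
        change fderiv ℝ (F + G).extend p (w p)
          = fderiv ℝ F.extend p (w p) + fderiv ℝ G.extend p (w p)
        have h : (F + G).extend =ᶠ[𝓝 (p : E)] F.extend + G.extend := extend_eventuallyEq
          (fun y => congr_arg₂ (· + ·) (F.extend_apply y) (G.extend_apply y)) p.2
        rw [h.fderiv_eq, fderiv_add (F.differentiableAt_extend p.2) (G.differentiableAt_extend p.2),
          add_apply]
      map_smul' r F := by
        ext p
        change fderiv ℝ (r • F).extend p (w p) = r * fderiv ℝ F.extend p (w p)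
        have h : (r • F).extend =ᶠ[𝓝 (p : E)] r • F.extend := extend_eventuallyEq
          (fun y => congr_arg (r * ·) (F.extend_apply y)) p.2
        rw [h.fderiv_eq, fderiv_const_smul (F.differentiableAt_extend p.2), smul_apply,
          smul_eq_mul] }
    fun F G => by
      ext p
      change fderiv ℝ (F * G).extend p (w p)
        = F.1 p * fderiv ℝ G.extend p (w p) + G.1 p * fderiv ℝ F.extend p (w p)
      have h : (F * G).extend =ᶠ[𝓝 (p : E)] F.extend * G.extend := extend_eventuallyEq
        (fun y => congr_arg₂ (· * ·) (F.extend_apply y) (G.extend_apply y)) p.2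
      rw [h.fderiv_eq, fderiv_mul (F.differentiableAt_extend p.2) (G.differentiableAt_extend p.2),
        F.extend_apply, G.extend_apply]
      rfl

theorem lieDeriv_apply_of_eqOn {w : E → E} (hw : ContDiff ℝ ∞ w) {F : SmoothFun W} {g : E → ℝ}
    (h : ∀ p : W, g p = F.1 p) (p : W) : (lieDeriv w hw F).1 p = fderiv ℝ g p (w p) :=
  DFunLike.congr_fun (extend_eventuallyEq h p.2).fderiv_eq (w p)

theorem lieDeriv_apply {w : E → E} (hw : ContDiff ℝ ∞ w) (F : SmoothFun W) (p : W) :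
    (lieDeriv w hw F).1 p = fderiv ℝ F.extend p (w p) :=
  rfl

theorem commutator_lieDeriv {v w : E → E} (hv : ContDiff ℝ ∞ v) (hw : ContDiff ℝ ∞ w) :
    ⁅lieDeriv (W := W) v hv, lieDeriv (W := W) w hw⁆
      = lieDeriv (VectorField.lieBracket ℝ v w) (hv.lieBracket_vectorField hw (by simp)) := by
  ext F p
  have hsmooth : minSmoothness ℝ 2 ≤ ∞ := by
    rw [minSmoothness_of_isRCLikeNormedField]
    exact ENat.LEInfty.out
  rw [Derivation.commutator_apply, lieDeriv_apply, VectorField.fderiv_apply_lieBracket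
    (F.contDiffAt_extend p.2) hsmooth (hw.differentiable (by simp) _)
    (hv.differentiable (by simp) _)]
  exact congr_arg₂ (· - ·) (lieDeriv_apply_of_eqOn hv (fun _ => rfl) p)
    (lieDeriv_apply_of_eqOn hw (fun _ => rfl) p)

end SmoothFun

/-! ### Averages along contractions -/

section Contraction

open SmoothFun

variable {E : Type*} [NormedAddCommGroup E] [NormedSpace ℝ E] {W : Opens E}

/-- Differentiation of smooth functions in the direction of a constant vector. -/
def dirDeriv (e : E) : Derivation ℝ (SmoothFun W) (SmoothFun W) :=
  lieDeriv (fun _ => e) contDiff_const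

theorem dirDeriv_sum_smul {ι : Type*} [Fintype ι] (r : ι → ℝ) (e : ι → E) (F : SmoothFun W) :
    dirDeriv (∑ i, r i • e i) F = ∑ i, r i • dirDeriv (e i) F := by
  ext p
  refine (map_sum (fderiv ℝ F.extend p) _ _).trans ?_
  simp only [map_smul, AddSubmonoidClass.coe_finsetSum, Finset.sum_apply]
  rfl

/-- A contraction of the open set `W` along the segments that join each point `p` to its image
under an affine map, here encoded by a fixed point `center` and a linear part. -/
structure Contraction (W : Opens E) where
  center : E
  linear : E →L[ℝ] E
  lineMap_mem : ∀ p ∈ W, ∀ s ∈ Set.Icc (0 : ℝ) 1,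
    AffineMap.lineMap (linear (p - center) + center) p s ∈ W

namespace Contraction

variable (ρ : Contraction W)

/-- The affine map onto whose image `ρ` contracts. -/
def base (p : E) : E := ρ.linear (p - ρ.center) + ρ.center

theorem hasFDerivAt_base (p : E) : HasFDerivAt ρ.base ρ.linear p :=
  (ρ.linear.hasFDerivAt.comp p ((hasFDerivAt_id p).sub_const ρ.center)).add_const ρ.center

/-- The segment from `ρ.base p` to `p`, parametrized on `[0, 1]`. -/
def path (p : E) (s : ℝ) : E := AffineMap.lineMap (ρ.base p) p s

theorem path_mem {p : E} (hp : p ∈ W) {s : ℝ} (hs : s ∈ Set.uIcc (0 : ℝ) 1) :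
    ρ.path p s ∈ W :=
  ρ.lineMap_mem p hp s (Set.uIcc_of_le (zero_le_one' ℝ) ▸ hs)

theorem path_eq (p : E) (s : ℝ) : ρ.path p s = s • (p - ρ.base p) + ρ.base p :=
  AffineMap.lineMap_apply_module' _ _ _

theorem contDiff_path : ContDiff ℝ ∞ fun z : E × ℝ => ρ.path z.1 z.2 := by
  simp only [path_eq, base]
  fun_prop

theorem hasFDerivAt_path (p : E) (s : ℝ) :
    HasFDerivAt (ρ.path · s) (AffineMap.lineMap ρ.linear (.id ℝ E) s) p := by
  simp only [path_eq, AffineMap.lineMap_apply_module']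
  exact (((hasFDerivAt_id p).sub (ρ.hasFDerivAt_base p)).const_smul s).add (ρ.hasFDerivAt_base p)

theorem hasDerivAt_path (p : E) (s : ℝ) : HasDerivAt (ρ.path p) (p - ρ.base p) s :=
  AffineMap.hasDerivAt_lineMap

/-- The points `(p, s)` at which the integrands of `ρ.average` are smooth. -/
def pathDomain : Set (E × ℝ) := {z | ρ.path z.1 z.2 ∈ W}

theorem isOpen_pathDomain : IsOpen ρ.pathDomain :=
  W.isOpen.preimage ρ.contDiff_path.continuous

theorem prod_subset_pathDomain : (W : Set E) ×ˢ Set.uIcc (0 : ℝ) 1 ⊆ ρ.pathDomain :=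
  fun _ hz => ρ.path_mem hz.1 hz.2

theorem contDiffOn_pow_mul_extend_path (k : ℕ) (F : SmoothFun W) :
    ContDiffOn ℝ ∞ (fun z : E × ℝ => z.2 ^ k * F.extend (ρ.path z.1 z.2)) ρ.pathDomain :=
  (contDiff_snd.pow k).contDiffOn.mul
    (F.contDiffOn_extend.comp ρ.contDiff_path.contDiffOn fun _ hz => hz)

theorem intervalIntegrable_pow_mul_extend_path (k : ℕ) (F : SmoothFun W) (p : W) :
    IntervalIntegrable (fun s => s ^ k * F.extend (ρ.path p s)) MeasureTheory.volume 0 1 :=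
  ((ρ.contDiffOn_pow_mul_extend_path k F).continuousOn.comp
    (f := fun s => ((p : E), s)) (by fun_prop) fun _ hs => ρ.path_mem p.2 hs).intervalIntegrable

variable [FiniteDimensional ℝ E]

/-- The weighted average `p ↦ ∫₀¹ s ^ k F(ρ.path p s) ds` of `F` along the contraction, the
building block of the homotopy operators. -/
def average (k : ℕ) : SmoothFun W →ₗ[ℝ] SmoothFun W where
  toFun F := restrict (fun p => ∫ s in (0 : ℝ)..1, s ^ k * F.extend (ρ.path p s))
    (contDiffOn_intervalIntegral ρ.isOpen_pathDomain (ρ.contDiffOn_pow_mul_extend_path k F)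
      W.isOpen ρ.prod_subset_pathDomain)
  map_add' F G := by
    ext p
    refine (intervalIntegral.integral_congr fun s hs => ?_).trans
      (intervalIntegral.integral_add (ρ.intervalIntegrable_pow_mul_extend_path k F p)
        (ρ.intervalIntegrable_pow_mul_extend_path k G p))
    have h (F : SmoothFun W) := F.extend_apply ⟨ρ.path p s, ρ.path_mem p.2 hs⟩
    simp only [h, ← mul_add]
    rfl
  map_smul' r F := by
    ext p
    refine (intervalIntegral.integral_congr fun s hs => ?_).trans
      (intervalIntegral.integral_const_mul r _)
    have h (F : SmoothFun W) := F.extend_apply ⟨ρ.path p s, ρ.path_mem p.2 hs⟩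
    simp only [h, mul_left_comm r]
    rfl

theorem average_lieDeriv_apply {w : E → E} (hw : ContDiff ℝ ∞ w) (k : ℕ) (F : SmoothFun W)
    (p : W) : (ρ.average k (lieDeriv w hw F)).1 p
      = ∫ s in (0 : ℝ)..1, s ^ k * fderiv ℝ F.extend (ρ.path p s) (w (ρ.path p s)) := by
  refine intervalIntegral.integral_congr fun s hs => congr_arg (s ^ k * ·) ?_
  exact (lieDeriv w hw F).extend_apply ⟨ρ.path p s, ρ.path_mem p.2 hs⟩

theorem lieDeriv_average {w : E → E} (hw : ContDiff ℝ ∞ w) {j : ℕ}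
    (h : ∀ p s, AffineMap.lineMap (ρ.linear (w p)) (w p) s = s ^ j • w (ρ.path p s))
    (k : ℕ) (F : SmoothFun W) :
    lieDeriv w hw (ρ.average k F) = ρ.average (k + j) (lieDeriv w hw F) := by
  ext p
  have hsmooth := ρ.contDiffOn_pow_mul_extend_path k F
  rw [average_lieDeriv_apply]
  refine (lieDeriv_apply_of_eqOn hw
    (g := fun x => ∫ s in (0 : ℝ)..1, s ^ k * F.extend (ρ.path x s)) (fun _ => rfl) p).trans ?_
  rw [fderiv_intervalIntegral_apply ρ.isOpen_pathDomain (hsmooth.of_le (by simp))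
      fun s hs => ρ.path_mem p.2 hs]
  refine intervalIntegral.integral_congr fun s hs => ?_
  have hpath : ρ.path p s ∈ W := ρ.path_mem p.2 hs
  have hdiff := (hsmooth.contDiffAt (ρ.isOpen_pathDomain.mem_nhds hpath)).differentiableAt
    (x := ((p : E), s)) (by simp)
  have hslice := hdiff.hasFDerivAt.comp (f := fun x => (x, s)) (p : E)
    (hasFDerivAt_prodMk_left (p : E) s)
  have hslice' := (((F.differentiableAt_extend hpath).hasFDerivAt.comp (p : E)
    (ρ.hasFDerivAt_path p s)).const_mul (s ^ k))
  have hfield : AffineMap.lineMap ρ.linear (.id ℝ E) s (w p)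
      = s ^ j • w (ρ.path p s) := by
    rw [← h, AffineMap.lineMap_apply_module, AffineMap.lineMap_apply_module]
    rfl
  refine (DFunLike.congr_fun (hslice.unique hslice') (w p)).trans ?_
  simp only [smul_apply, ContinuousLinearMap.comp_apply, hfield, map_smul, smul_eq_mul, pow_add,
    mul_assoc]

theorem average_add_average_radial (k : ℕ) (F : SmoothFun W) (p : W) :
    (k + 1) * (ρ.average k F).1 p + (ρ.average (k + 1) (dirDeriv ((p : E) - ρ.base p) F)).1 p
      = F.1 p := by
  have hderiv : ∀ s ∈ Set.uIcc (0 : ℝ) 1,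
      HasDerivAt (fun s => s ^ (k + 1) * F.extend (ρ.path p s))
        ((k + 1) * (s ^ k * F.extend (ρ.path p s))
          + s ^ (k + 1) * (dirDeriv ((p : E) - ρ.base p) F).extend (ρ.path p s)) s := by
    intro s hs
    have hpath : ρ.path p s ∈ W := ρ.path_mem p.2 hs
    have hpow : HasDerivAt (fun s : ℝ => s ^ (k + 1)) ((k + 1) * s ^ k) s := by
      simpa using hasDerivAt_pow (k + 1) s
    rw [← mul_assoc, (dirDeriv _ F).extend_apply ⟨_, hpath⟩]
    exact hpow.mul
      ((F.differentiableAt_extend hpath).hasFDerivAt.comp_hasDerivAt s (ρ.hasDerivAt_path p s))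
  have hint (k : ℕ) (F : SmoothFun W) := ρ.intervalIntegrable_pow_mul_extend_path k F p
  have hftc := intervalIntegral.integral_eq_sub_of_hasDerivAt hderiv
    (((hint k F).const_mul _).add (hint (k + 1) _))
  rw [intervalIntegral.integral_add ((hint k F).const_mul _) (hint (k + 1) _),
    intervalIntegral.integral_const_mul] at hftc
  refine hftc.trans ?_
  rw [one_pow, one_mul, zero_pow k.succ_ne_zero, zero_mul, sub_zero, path,
    AffineMap.lineMap_apply_one, F.extend_apply]

theorem average_euler {ι : Type*} [Fintype ι] {e : ι → E} {ℓ : ι → SmoothFun W}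
    (h : ∀ p : W, (p : E) - ρ.base p = ∑ i, (ℓ i).1 p • e i) (k : ℕ) (F : SmoothFun W) :
    ((k : ℝ) + 1) • ρ.average k F + ∑ i, ℓ i * ρ.average (k + 1) (dirDeriv (e i) F) = F := by
  ext p
  rw [← ρ.average_add_average_radial k F p, h, dirDeriv_sum_smul, map_sum]
  simp only [map_smul, AddMemClass.coe_add, AddSubmonoidClass.coe_finsetSum, Pi.add_apply,
    Finset.sum_apply]
  rfl

end Contraction

end Contraction

/-! ### The total derivative and cylinders -/

section ConstantFields

open SmoothFun

variable {E : Type*} [NormedAddCommGroup E] [NormedSpace ℝ E] {W : Opens E}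

theorem dirDeriv_lieDeriv {e e' : E} {w : E → E} (hw : ContDiff ℝ ∞ w)
    (h : ∀ p, fderiv ℝ w p e = e') (F : SmoothFun W) :
    dirDeriv e (lieDeriv w hw F) = lieDeriv w hw (dirDeriv e F) + dirDeriv e' F := by
  rw [← sub_eq_iff_eq_add', dirDeriv, ← Derivation.commutator_apply, commutator_lieDeriv]
  have hbracket : VectorField.lieBracket ℝ (fun _ => e) w = fun _ => e' := by
    ext1 p
    rw [VectorField.lieBracket, h, fderiv_fun_const, Pi.zero_apply, zero_apply, sub_zero]
  simp only [hbracket, dirDeriv]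

theorem dirDeriv_zero (F : SmoothFun W) : dirDeriv 0 F = 0 := by
  ext p
  exact map_zero (fderiv ℝ F.extend p)

theorem dirDeriv_comm (e e' : E) (F : SmoothFun W) :
    dirDeriv e (dirDeriv e' F) = dirDeriv e' (dirDeriv e F) := by
  refine (dirDeriv_lieDeriv (e' := 0) contDiff_const (fun p => ?_) F).trans ?_
  · rw [fderiv_fun_const, Pi.zero_apply, zero_apply]
  · rw [dirDeriv_zero, add_zero]
    rfl

/-- The coordinate function `p ↦ ℓ (p - p₀)` on `W`. -/
def coordinate (ℓ : E →L[ℝ] ℝ) (p₀ : E) : SmoothFun W :=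
  restrict (fun p => ℓ (p - p₀)) (by fun_prop)

theorem lieDeriv_coordinate {w : E → E} (hw : ContDiff ℝ ∞ w) (ℓ : E →L[ℝ] ℝ) (p₀ : E) (p : W) :
    (lieDeriv w hw (coordinate ℓ p₀)).1 p = ℓ (w p) := by
  refine (lieDeriv_apply_of_eqOn hw (g := fun x => ℓ (x - p₀)) (fun _ => rfl) p).trans ?_
  exact DFunLike.congr_fun
    (ℓ.hasFDerivAt.comp (p : E) ((hasFDerivAt_id (p : E)).sub_const p₀)).fderiv _

theorem dirDeriv_coordinate (e : E) (ℓ : E →L[ℝ] ℝ) (p₀ : E) :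
    dirDeriv e (coordinate (W := W) ℓ p₀) = algebraMap ℝ (SmoothFun W) (ℓ e) := by
  ext p
  exact lieDeriv_coordinate contDiff_const ℓ p₀ p

theorem Contraction.dirDeriv_average [FiniteDimensional ℝ E] (ρ : Contraction W) {e : E}
    (he : ρ.linear e = 0) (k : ℕ) (F : SmoothFun W) :
    dirDeriv e (ρ.average k F) = ρ.average (k + 1) (dirDeriv e F) :=
  ρ.lieDeriv_average contDiff_const (j := 1)
    (fun _ s => by rw [he, pow_one, AffineMap.lineMap_apply_module', sub_zero, add_zero]) k F

end ConstantFields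

section Jet

variable {q : ℕ}

/-- The space of positions and velocities at a time, with points `(t, x, v)`. -/
abbrev Jet (q : ℕ) := ℝ × (Fin q → ℝ) × (Fin q → ℝ)

variable {W : Opens (Jet q)}

/-- The partial derivative `∂/∂x^a`. -/
def dX (a : Fin q) : Derivation ℝ (SmoothFun W) (SmoothFun W) := dirDeriv (0, Pi.single a 1, 0)

/-- The partial derivative `∂/∂v^a`. -/
def dV (a : Fin q) : Derivation ℝ (SmoothFun W) (SmoothFun W) := dirDeriv (0, 0, Pi.single a 1)

/-- The total derivative `D₁ = ∂_t + v^a ∂_{x^a}`. -/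
def dTot : Derivation ℝ (SmoothFun W) (SmoothFun W) :=
  lieDeriv (fun p => (1, p.2.2, 0)) (by fun_prop)

theorem dX_comm (a b : Fin q) (F : SmoothFun W) : dX a (dX b F) = dX b (dX a F) :=
  dirDeriv_comm _ _ F

theorem dV_comm (a b : Fin q) (F : SmoothFun W) : dV a (dV b F) = dV b (dV a F) :=
  dirDeriv_comm _ _ F

theorem dV_dX (a b : Fin q) (F : SmoothFun W) : dV a (dX b F) = dX b (dV a F) :=
  dirDeriv_comm _ _ F

theorem fderiv_dTot_field (p e : Jet q) :
    fderiv ℝ (fun p : Jet q => ((1, p.2.2, 0) : Jet q)) p e = (0, e.2.2, 0) := by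
  have hvel := ((ContinuousLinearMap.snd ℝ (Fin q → ℝ) (Fin q → ℝ)).comp
    (ContinuousLinearMap.snd ℝ ℝ _)).hasFDerivAt (x := p)
  have h := (hasFDerivAt_const (1 : ℝ) p).prodMk
    (hvel.prodMk (hasFDerivAt_const (0 : Fin q → ℝ) p))
  exact DFunLike.congr_fun h.fderiv e

theorem dX_dTot (a : Fin q) (F : SmoothFun W) : dX a (dTot F) = dTot (dX a F) := by
  refine (dirDeriv_lieDeriv _ (fun p => fderiv_dTot_field p _) F).trans ?_
  exact (congr_arg _ (dirDeriv_zero F)).trans (add_zero _)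

theorem dV_dTot (a : Fin q) (F : SmoothFun W) : dV a (dTot F) = dTot (dV a F) + dX a F :=
  dirDeriv_lieDeriv _ (fun p => fderiv_dTot_field p _) F

/-- The linear map `(t, x, v) ↦ (t, x + t u, v)`, a change to a frame in uniform motion. -/
def shear (u : Fin q → ℝ) : Jet q →L[ℝ] Jet q :=
  (ContinuousLinearMap.fst ..).prod
    (((ContinuousLinearMap.fst ..).comp (ContinuousLinearMap.snd ..)
      + (ContinuousLinearMap.fst ..).smulRight u).prod
        ((ContinuousLinearMap.snd ..).comp (ContinuousLinearMap.snd ..)))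

theorem shear_apply (u : Fin q → ℝ) (p : Jet q) :
    shear u p = (p.1, p.2.1 + p.1 • u, p.2.2) := rfl

theorem shear_shear_neg (u : Fin q → ℝ) (p : Jet q) : shear u (shear (-u) p) = p := by
  simp [shear_apply]

/-- The points within distance `r` of `p₀` as seen in the frame that moves with the velocity of
`p₀`. Unlike a ball around `p₀`, it is stable under `motionContraction`. -/
def cylinder (p₀ : Jet q) (r : ℝ) : Opens (Jet q) where
  carrier := {p | shear (-p₀.2.2) (p - p₀) ∈ Metric.ball 0 r}
  is_open' := Metric.isOpen_ball.preimage (by fun_prop)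

theorem mem_cylinder_self (p₀ : Jet q) {r : ℝ} (hr : 0 < r) : p₀ ∈ cylinder p₀ r := by
  simpa [cylinder, ← SetLike.mem_coe] using hr

theorem exists_cylinder_subset {Ω : Set (Jet q)} (hΩ : IsOpen Ω) {p₀ : Jet q} (hp₀ : p₀ ∈ Ω) :
    ∃ r > 0, (cylinder p₀ r : Set (Jet q)) ⊆ Ω := by
  have hcont : Continuous fun u => shear p₀.2.2 u + p₀ := by fun_prop
  have hnhds : (fun u => shear p₀.2.2 u + p₀) ⁻¹' Ω ∈ 𝓝 0 :=
    (hΩ.preimage hcont).mem_nhds (by simpa using hp₀)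
  obtain ⟨r, hr, hball⟩ := Metric.mem_nhds_iff.1 hnhds
  refine ⟨r, hr, fun p hp => ?_⟩
  simpa [shear_shear_neg] using hball hp

theorem lineMap_mem_cylinder {p₀ p : Jet q} {r : ℝ} {L : Jet q →L[ℝ] Jet q}
    (hL : ‖shear (-p₀.2.2) (L (p - p₀))‖ ≤ ‖shear (-p₀.2.2) (p - p₀)‖) (hp : p ∈ cylinder p₀ r)
    {s : ℝ} (hs : s ∈ Set.Icc (0 : ℝ) 1) :
    AffineMap.lineMap (L (p - p₀) + p₀) p s ∈ cylinder p₀ r := by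
  have hp' : shear (-p₀.2.2) (p - p₀) ∈ Metric.ball 0 r := hp
  have hLp : shear (-p₀.2.2) (L (p - p₀)) ∈ Metric.ball 0 r :=
    mem_ball_zero_iff.2 (hL.trans_lt (mem_ball_zero_iff.1 hp'))
  change shear (-p₀.2.2) (AffineMap.lineMap (L (p - p₀) + p₀) p s - p₀) ∈ Metric.ball 0 r
  convert (convex_ball _ _).lineMap_mem hLp hp' hs using 1
  simp only [AffineMap.lineMap_apply_module', ← map_sub, ← map_smul, ← map_add]
  congr 1
  module

/-- The contraction `(t, x, v) ↦ (t, x, v₀)`. -/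
def velocityContraction (p₀ : Jet q) (r : ℝ) : Contraction (cylinder p₀ r) where
  center := p₀
  linear := (ContinuousLinearMap.fst ..).prod
    (((ContinuousLinearMap.fst ..).comp (ContinuousLinearMap.snd ..)).prod 0)
  lineMap_mem _ hp _ hs := lineMap_mem_cylinder
    (by
      simp only [Prod.norm_def]
      refine max_le_max_left _ (max_le (le_max_left _ _) ?_)
      simp [shear_apply]) hp hs

/-- The contraction `(t, x, v) ↦ (t, x₀ + (t - t₀) v₀, v₀)` onto the uniform motion through `p₀`.
Since the latter is a prolonged curve, the contraction is compatible with `dTot`. -/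
def motionContraction (p₀ : Jet q) (r : ℝ) : Contraction (cylinder p₀ r) where
  center := p₀
  linear := (ContinuousLinearMap.fst ..).prod
    (((ContinuousLinearMap.fst ..).smulRight p₀.2.2).prod 0)
  lineMap_mem _ hp _ hs := lineMap_mem_cylinder
    (by simp [shear_apply, Prod.norm_def]) hp hs

section CylinderCoordinates

variable (p₀ : Jet q) {r : ℝ}

/-- The coordinate `v^b - v₀^b` on a cylinder. -/
def velocityCoord (b : Fin q) : SmoothFun (cylinder p₀ r) :=
  coordinate ((ContinuousLinearMap.proj b).comp
    ((ContinuousLinearMap.snd ..).comp (ContinuousLinearMap.snd ..))) p₀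

/-- The coordinate `x^b - x₀^b - (t - t₀) v₀^b` on a cylinder. -/
def positionCoord (b : Fin q) : SmoothFun (cylinder p₀ r) :=
  coordinate ((ContinuousLinearMap.proj b).comp
    ((ContinuousLinearMap.fst ..).comp ((ContinuousLinearMap.snd ..).comp (shear (-p₀.2.2))))) p₀

theorem dV_velocityCoord (a b : Fin q) :
    dV a (velocityCoord (r := r) p₀ b) = if a = b then 1 else 0 := by
  refine (dirDeriv_coordinate _ _ _).trans ?_
  split_ifs with h
  · subst h
    simp
  · simp [h]

theorem dV_positionCoord (a b : Fin q) : dV a (positionCoord (r := r) p₀ b) = 0 := by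
  refine (dirDeriv_coordinate _ _ _).trans ?_
  simp [shear_apply]

theorem dX_positionCoord (a b : Fin q) :
    dX a (positionCoord (r := r) p₀ b) = if a = b then 1 else 0 := by
  refine (dirDeriv_coordinate _ _ _).trans ?_
  split_ifs with h
  · subst h
    simp [shear_apply]
  · simp [shear_apply, h]

theorem dTot_positionCoord (b : Fin q) :
    dTot (positionCoord (r := r) p₀ b) = velocityCoord p₀ b := by
  ext p
  refine (lieDeriv_coordinate _ _ _ p).trans ?_
  simp [shear_apply, velocityCoord, coordinate, SmoothFun.restrict, sub_eq_add_neg]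

theorem velocityContraction_dV_average (a : Fin q) (k : ℕ) (F : SmoothFun (cylinder p₀ r)) :
    dV a ((velocityContraction p₀ r).average k F)
      = (velocityContraction p₀ r).average (k + 1) (dV a F) :=
  Contraction.dirDeriv_average _ (by simp [velocityContraction]) k F

theorem motionContraction_dV_average (a : Fin q) (k : ℕ) (F : SmoothFun (cylinder p₀ r)) :
    dV a ((motionContraction p₀ r).average k F)
      = (motionContraction p₀ r).average (k + 1) (dV a F) :=
  Contraction.dirDeriv_average _ (by simp [motionContraction]) k F

theorem motionContraction_dX_average (a : Fin q) (k : ℕ) (F : SmoothFun (cylinder p₀ r)) :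
    dX a ((motionContraction p₀ r).average k F)
      = (motionContraction p₀ r).average (k + 1) (dX a F) :=
  Contraction.dirDeriv_average _ (by simp [motionContraction]) k F

theorem motionContraction_dTot_average (k : ℕ) (F : SmoothFun (cylinder p₀ r)) :
    dTot ((motionContraction p₀ r).average k F)
      = (motionContraction p₀ r).average k (dTot F) := by
  refine (motionContraction p₀ r).lieDeriv_average _ (j := 0) (fun p s => ?_) k F
  simp [motionContraction, Contraction.path_eq, Contraction.base, AffineMap.lineMap_apply_module']

theorem velocityContraction_euler (k : ℕ) (F : SmoothFun (cylinder p₀ r)) :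
    ((k : ℝ) + 1) • (velocityContraction p₀ r).average k F
      + ∑ b, velocityCoord p₀ b * (velocityContraction p₀ r).average (k + 1) (dV b F) = F := by
  refine (velocityContraction p₀ r).average_euler (e := fun b => (0, 0, Pi.single b 1))
    (fun p => ?_) k F
  ext <;> simp [velocityContraction, Contraction.base, velocityCoord, coordinate,
    SmoothFun.restrict, Prod.fst_sum, Prod.snd_sum, Finset.sum_apply, Pi.single_apply]

theorem motionContraction_euler (k : ℕ) (F : SmoothFun (cylinder p₀ r)) :
    ((k : ℝ) + 1) • (motionContraction p₀ r).average k F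
      + (∑ b, positionCoord p₀ b * (motionContraction p₀ r).average (k + 1) (dX b F)
        + ∑ b, velocityCoord p₀ b * (motionContraction p₀ r).average (k + 1) (dV b F)) = F := by
  have h := (motionContraction p₀ r).average_euler
    (ℓ := Sum.elim (positionCoord p₀) (velocityCoord p₀))
    (e := Sum.elim (fun b => (0, Pi.single b 1, 0)) (fun b => (0, 0, Pi.single b 1)))
    (fun p => ?_) k F
  · rwa [Fintype.sum_sum_type] at h
  ext i
  case snd.fst =>
    simp [motionContraction, Contraction.base, velocityCoord, positionCoord, coordinate,
      SmoothFun.restrict, Prod.fst_sum, Prod.snd_sum, Finset.sum_apply, Pi.single_apply,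
      shear_apply]
    ring
  all_goals
    simp [motionContraction, Contraction.base, velocityCoord, positionCoord, coordinate,
      SmoothFun.restrict, Prod.fst_sum, Prod.snd_sum, Finset.sum_apply, Pi.single_apply]

end CylinderCoordinates

end Jet

/-! ### Poincaré lemmas -/

section Homotopy

variable {q : ℕ} {p₀ : Jet q} {r : ℝ}

theorem dV_sum_velocityCoord_mul (a : Fin q) (k : ℕ) (β : Fin q → SmoothFun (cylinder p₀ r)) :
    dV a (∑ b, velocityCoord p₀ b * (velocityContraction p₀ r).average k (β b))
      = (velocityContraction p₀ r).average k (β a)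
        + ∑ b, velocityCoord p₀ b * (velocityContraction p₀ r).average (k + 1) (dV a (β b)) := by
  simp only [map_sum, Derivation.leibniz, smul_eq_mul, dV_velocityCoord,
    velocityContraction_dV_average, mul_ite, mul_one, mul_zero, Finset.sum_add_distrib,
    Finset.sum_ite_eq, Finset.mem_univ, if_true, add_comm]

theorem exists_dV_eq (β : Fin q → SmoothFun (cylinder p₀ r))
    (hclosed : ∀ a b, dV a (β b) = dV b (β a)) : ∃ f, ∀ a, dV a f = β a := by
  refine ⟨∑ b, velocityCoord p₀ b * (velocityContraction p₀ r).average 0 (β b), fun a => ?_⟩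
  simp only [dV_sum_velocityCoord_mul, hclosed a]
  simpa using velocityContraction_euler p₀ 0 (β a)

theorem exists_dV_sub_dV_eq (A : Fin q → Fin q → SmoothFun (cylinder p₀ r))
    (hskew : ∀ a b, A a b = -A b a)
    (hclosed : ∀ a b c, dV a (A b c) + dV b (A c a) + dV c (A a b) = 0) :
    ∃ α : Fin q → SmoothFun (cylinder p₀ r), ∀ a b, dV b (α a) - dV a (α b) = A a b := by
  refine ⟨fun a => ∑ c, velocityCoord p₀ c * (velocityContraction p₀ r).average 1 (A a c),
    fun a b => ?_⟩
  have hcyclic (c : Fin q) : dV b (A a c) - dV a (A b c) = dV c (A a b) := by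
    rw [hskew a c, map_neg]
    linear_combination -hclosed a b c
  rw [dV_sum_velocityCoord_mul, dV_sum_velocityCoord_mul, add_sub_add_comm,
    ← Finset.sum_sub_distrib, hskew b a, map_neg, sub_neg_eq_add, ← two_smul ℝ]
  simp only [← mul_sub, ← map_sub, hcyclic]
  convert velocityContraction_euler p₀ 1 (A a b) using 3
  norm_num

/-- Tonti's homotopy, along a contraction that commutes with `dTot`. -/
theorem exists_dX_sub_dTot_dV_eq (c : Fin q → SmoothFun (cylinder p₀ r))
    (hV : ∀ a b, dV a (c b) + dV b (c a) = 0)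
    (hX : ∀ a b, dX a (c b) - dTot (dV a (c b)) = dX b (c a))
    (haffine : ∀ a b d, dV a (dV b (c d)) = 0) :
    ∃ H, (∀ a b, dV a (dV b H) = 0) ∧ ∀ a, dX a H - dTot (dV a H) = c a := by
  have hdV (a : Fin q) (k : ℕ) (β : Fin q → SmoothFun (cylinder p₀ r)) :
      dV a (∑ b, positionCoord p₀ b * (motionContraction p₀ r).average k (β b))
        = ∑ b, positionCoord p₀ b * (motionContraction p₀ r).average (k + 1) (dV a (β b)) := by
    simp only [map_sum, Derivation.leibniz, smul_eq_mul, dV_positionCoord, mul_zero, add_zero,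
      motionContraction_dV_average]
  refine ⟨∑ b, positionCoord p₀ b * (motionContraction p₀ r).average 0 (c b),
    fun a b => ?_, fun a => ?_⟩
  · simp only [hdV, haffine, map_zero, mul_zero, Finset.sum_const_zero]
  have hvelocity : ∑ b, velocityCoord p₀ b * (motionContraction p₀ r).average 1 (dV a (c b))
      + ∑ b, velocityCoord p₀ b * (motionContraction p₀ r).average 1 (dV b (c a)) = 0 := by
    simp only [← Finset.sum_add_distrib, ← mul_add, ← map_add, hV, map_zero, mul_zero,
      Finset.sum_const_zero]
  have hEuler := motionContraction_euler p₀ 0 (c a)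
  simp only [Nat.cast_zero, zero_add, one_smul, ← hX a, map_sub, mul_sub,
    Finset.sum_sub_distrib] at hEuler
  rw [hdV]
  simp only [map_sum, Derivation.leibniz, smul_eq_mul, dX_positionCoord, dTot_positionCoord,
    motionContraction_dX_average, motionContraction_dTot_average, mul_ite, mul_one, mul_zero,
    Finset.sum_add_distrib, Finset.sum_ite_eq, Finset.mem_univ, if_true, zero_add]
  simp only [mul_comm ((motionContraction p₀ r).average _ _)]
  linear_combination hEuler - hvelocity

end Homotopy

/-! ### The inverse problem of the calculus of variations -/

section Helmholtz

variable {q : ℕ} {W : Opens (Jet q)}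

/-- The conditions (21), with `A` skew, as identities between smooth functions, without
denominators. -/
structure IsHelmholtz (A B : Fin q → Fin q → SmoothFun W) (c : Fin q → SmoothFun W) : Prop where
  skew : ∀ a b, A a b = -A b a
  dV_A : ∀ a b d, dV a (A b d) + dV b (A d a) + dV d (A a b) = 0
  B_sub_B : ∀ a b, B a b - B b a = 3 * dTot (A a b)
  dV_B : ∀ a b d, dV a (B b d) - dV b (B a d) - 2 * (dX a (A b d) - dX b (A a d))
    + dX d (A a b) + 2 * dTot (dV d (A a b)) = 0
  dV_c : ∀ a b, dV a (c b) + dV b (c a) = dTot (B a b + B b a)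
  dV_dV_c : ∀ a b d, dV d (dV a (c b) - dV b (c a)) - 2 * (dX a (B b d) - dX b (B a d))
    + dTot (dTot (dV d (A a b)))
    + 2 * dTot (dX a (A b d) + dX b (A d a) + dX d (A a b)) = 0
  dX_c : ∀ a b, 2 * (dX a (c b) - dX b (c a)) - dTot (dV a (c b) - dV b (c a))
    - dTot (dTot (dTot (A a b))) = 0

theorem IsHelmholtz.sub {A B A' B' : Fin q → Fin q → SmoothFun W} {c c' : Fin q → SmoothFun W}
    (h : IsHelmholtz A B c) (h' : IsHelmholtz A' B' c') :
    IsHelmholtz (A - A') (B - B') (c - c') where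
  skew a b := by
    simp only [Pi.sub_apply]
    linear_combination h.skew a b - h'.skew a b
  dV_A a b d := by
    simp only [Pi.sub_apply, map_sub]
    linear_combination h.dV_A a b d - h'.dV_A a b d
  B_sub_B a b := by
    simp only [Pi.sub_apply, map_sub]
    linear_combination h.B_sub_B a b - h'.B_sub_B a b
  dV_B a b d := by
    simp only [Pi.sub_apply, map_sub]
    linear_combination h.dV_B a b d - h'.dV_B a b d
  dV_c a b := by
    have h₁ := h.dV_c a b
    have h₂ := h'.dV_c a b
    simp only [Pi.sub_apply, map_sub, map_add] at h₁ h₂ ⊢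
    linear_combination h₁ - h₂
  dV_dV_c a b d := by
    have h₁ := h.dV_dV_c a b d
    have h₂ := h'.dV_dV_c a b d
    simp only [Pi.sub_apply, map_sub, map_add] at h₁ h₂ ⊢
    linear_combination h₁ - h₂
  dX_c a b := by
    have h₁ := h.dX_c a b
    have h₂ := h'.dX_c a b
    simp only [Pi.sub_apply, map_sub] at h₁ h₂ ⊢
    linear_combination h₁ - h₂

/-- The coefficient `A` of the Euler–Poisson expression of the Lagrangian `α_b v'^b + H`. -/
def lagrangianA (α : Fin q → SmoothFun W) (a b : Fin q) : SmoothFun W :=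
  dV b (α a) - dV a (α b)

/-- The coefficient `B` of the Euler–Poisson expression of the Lagrangian `α_b v'^b + H`. -/
def lagrangianB (α : Fin q → SmoothFun W) (H : SmoothFun W) (a b : Fin q) : SmoothFun W :=
  dX a (α b) + dX b (α a) + dTot (dV b (α a)) + dTot (lagrangianA α a b) - dV a (dV b H)

/-- The coefficient `c` of the Euler–Poisson expression of the Lagrangian `α_b v'^b + H`. -/
def lagrangianC (α : Fin q → SmoothFun W) (H : SmoothFun W) (a : Fin q) : SmoothFun W :=
  dX a H - dTot (dV a H) + dTot (dTot (α a))

theorem lagrangianB_add (α α' : Fin q → SmoothFun W) (H H' : SmoothFun W) :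
    lagrangianB (α + α') (H + H') = lagrangianB α H + lagrangianB α' H' := by
  ext1 a
  ext1 b
  simp only [lagrangianB, lagrangianA, Pi.add_apply, map_add, map_sub]
  ring

theorem lagrangianC_add (α α' : Fin q → SmoothFun W) (H H' : SmoothFun W) :
    lagrangianC (α + α') (H + H') = lagrangianC α H + lagrangianC α' H' := by
  ext1 a
  simp only [lagrangianC, Pi.add_apply, map_add]
  ring

theorem lagrangianB_zero (H : SmoothFun W) (a b : Fin q) :
    lagrangianB 0 H a b = -dV a (dV b H) := by
  simp only [lagrangianB, lagrangianA, Pi.zero_apply, map_zero, sub_zero, add_zero, zero_sub]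

theorem lagrangianC_zero (H : SmoothFun W) (a : Fin q) :
    lagrangianC 0 H a = dX a H - dTot (dV a H) := by
  simp only [lagrangianC, Pi.zero_apply, map_zero, add_zero]

theorem lagrangianA_zero : lagrangianA (0 : Fin q → SmoothFun W) = 0 := by
  ext1 a
  ext1 b
  simp only [lagrangianA, Pi.zero_apply, map_zero, sub_zero]

theorem isHelmholtz_lagrangian (α : Fin q → SmoothFun W) (H : SmoothFun W) :
    IsHelmholtz (lagrangianA α) (lagrangianB α H) (lagrangianC α H) where
  skew a b := (neg_sub _ _).symm
  dV_A a b d := by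
    simp only [lagrangianA, map_sub, dV_comm]
    ring
  B_sub_B a b := by
    simp only [lagrangianB, lagrangianA, map_sub, dV_comm]
    ring
  dV_B a b d := by
    simp only [lagrangianB, lagrangianA, map_sub, map_add, dV_dTot, dV_dX, dV_comm]
    ring
  dV_c a b := by
    simp only [lagrangianB, lagrangianA, lagrangianC, map_sub, map_add, dV_dTot, dX_dTot, dV_dX,
      dV_comm]
    ring
  dV_dV_c a b d := by
    simp only [lagrangianB, lagrangianA, lagrangianC, map_sub, map_add, dV_dTot, dX_dTot, dV_dX,
      dV_comm, dX_comm]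
    ring
  dX_c a b := by
    simp only [lagrangianA, lagrangianC, map_sub, map_add, dV_dTot, dX_dTot, dV_dX, dV_comm,
      dX_comm]
    ring

theorem eq_zero_of_add_self {F : SmoothFun W} (h : F + F = 0) : F = 0 :=
  (smul_eq_zero_iff_right (two_ne_zero' ℝ)).1 ((two_smul ℝ F).trans h)

namespace IsHelmholtz

variable {p₀ : Jet q} {r : ℝ} {A B : Fin q → Fin q → SmoothFun (cylinder p₀ r)}
  {c : Fin q → SmoothFun (cylinder p₀ r)}

theorem exists_lagrangian_of_A_B_zero (h : IsHelmholtz 0 0 c) :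
    ∃ H, lagrangianB 0 H = 0 ∧ lagrangianC 0 H = c := by
  have hV (a b) : dV a (c b) + dV b (c a) = 0 := by
    simpa only [Pi.zero_apply, add_zero, map_zero] using h.dV_c a b
  have hX (a b) : dX a (c b) - dTot (dV a (c b)) = dX b (c a) := by
    have hVI := h.dX_c a b
    have hTot := congr_arg dTot (hV a b)
    simp only [Pi.zero_apply, map_zero, sub_zero, map_sub, map_add] at hVI hTot
    refine sub_eq_zero.1 (eq_zero_of_add_self ?_)
    linear_combination hVI - hTot
  have haffine (a b d) : dV a (dV b (c d)) = 0 := by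
    have hV' := h.dV_dV_c b d a
    have hdV := congr_arg (dV a) (hV b d)
    simp only [Pi.zero_apply, map_zero, sub_zero, add_zero, mul_zero, map_sub, map_add] at hV' hdV
    refine eq_zero_of_add_self ?_
    linear_combination hV' + hdV
  obtain ⟨H, hH, hHc⟩ := exists_dX_sub_dTot_dV_eq c hV hX haffine
  refine ⟨H, ?_, ?_⟩
  · ext1 a
    ext1 b
    rw [lagrangianB_zero, hH, neg_zero, Pi.zero_apply, Pi.zero_apply]
  · ext1 a
    rw [lagrangianC_zero, hHc]

theorem exists_lagrangian_of_A_zero (h : IsHelmholtz 0 B c) :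
    ∃ H, lagrangianB 0 H = B ∧ lagrangianC 0 H = c := by
  have hsymm (a b) : B a b = B b a := by
    simpa only [Pi.zero_apply, map_zero, mul_zero, sub_eq_zero] using h.B_sub_B a b
  have hclosed (a b d) : dV a (B b d) = dV b (B a d) := by
    simpa only [Pi.zero_apply, map_zero, mul_zero, sub_zero, add_zero, sub_eq_zero]
      using h.dV_B a b d
  choose f hf using fun d => exists_dV_eq (fun b => B b d) fun a b => hclosed a b d
  obtain ⟨G, hG⟩ := exists_dV_eq f fun a b => by rw [hf, hf, hsymm]
  have hB : lagrangianB 0 (-G) = B := by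
    ext1 a
    ext1 b
    rw [lagrangianB_zero, map_neg, map_neg, neg_neg, hG, hf]
  have hsub := h.sub (isHelmholtz_lagrangian 0 (-G))
  rw [lagrangianA_zero, hB, sub_self, sub_self] at hsub
  obtain ⟨H, hHB, hHc⟩ := hsub.exists_lagrangian_of_A_B_zero
  refine ⟨-G + H, ?_, ?_⟩
  · rw [← add_zero (0 : Fin q → _), lagrangianB_add, hB, hHB, add_zero]
  · rw [← add_zero (0 : Fin q → _), lagrangianC_add, hHc, add_sub_cancel]

theorem exists_lagrangian (h : IsHelmholtz A B c) :
    ∃ α H, lagrangianA α = A ∧ lagrangianB α H = B ∧ lagrangianC α H = c := by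
  obtain ⟨α, hα⟩ := exists_dV_sub_dV_eq A h.skew h.dV_A
  have hA : lagrangianA α = A := by
    ext1 a
    ext1 b
    exact hα a b
  have hsub := h.sub (isHelmholtz_lagrangian α 0)
  rw [hA, sub_self] at hsub
  obtain ⟨H, hHB, hHc⟩ := hsub.exists_lagrangian_of_A_zero
  refine ⟨α, H, hA, ?_, ?_⟩
  · rw [← add_zero α, ← zero_add H, lagrangianB_add, hHB, add_sub_cancel]
  · rw [← add_zero α, ← zero_add H, lagrangianC_add, hHc, add_sub_cancel]

end IsHelmholtz

end Helmholtz

/-! ### Partial derivatives in coordinates -/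

section Evaluation

variable {E : Type*} [NormedAddCommGroup E] [NormedSpace ℝ E] {W : Opens E}

/-- Evaluation at a point `p` of `W`. -/
def SmoothFun.eval (p : W) : SmoothFun W →ₐ[ℝ] ℝ :=
  (Pi.evalAlgHom ℝ (fun _ : W => ℝ) p).comp (smoothSubalgebra W).val

theorem SmoothFun.extend_eq_eval (F : SmoothFun W) (p : W) : F.extend p = eval p F :=
  F.extend_apply p

theorem SmoothFun.ext_eval {F G : SmoothFun W} (h : ∀ p, eval p F = eval p G) : F = G :=
  Subtype.ext (funext h)

theorem SmoothFun.hasDerivAt_comp {F : SmoothFun W} {g : E → ℝ} (h : ∀ p : W, g p = eval p F)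
    {γ : ℝ → E} {e : E} {s : ℝ} (hγ : HasDerivAt γ e s) {p : W} (hp : γ s = p) :
    HasDerivAt (fun s => g (γ s)) (eval p (dirDeriv e F)) s := by
  have hg : HasFDerivAt g (fderiv ℝ F.extend p) (γ s) := by
    rw [hp]
    exact (F.differentiableAt_extend p.2).hasFDerivAt.congr_of_eventuallyEq
      (extend_eventuallyEq h p.2).symm
  exact hg.comp_hasDerivAt s hγ

end Evaluation

section Coordinates

open SmoothFun

variable {q : ℕ} {W : Opens (Jet q)} {F F' : ℝ → (Fin q → ℝ) → (Fin q → ℝ) → ℝ}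
  {G G' : SmoothFun W}

/-- `F` agrees on `W` with the smooth function `G`, so that identities between partial derivatives
of `F` in the sense of `pdx`, `pdv` and `D1` become identities in the algebra `SmoothFun W`. -/
def Represents (G : SmoothFun W) (F : ℝ → (Fin q → ℝ) → (Fin q → ℝ) → ℝ) : Prop :=
  ∀ p : W, F p.1.1 p.1.2.1 p.1.2.2 = eval p G

theorem represents_restrict (hF : ContDiffOn ℝ ∞ (fun p : Jet q => F p.1 p.2.1 p.2.2) W) :
    Represents (restrict _ hF) F := fun _ => rfl

theorem eval_dirDeriv (p : W) (τ : ℝ) (x v : Fin q → ℝ) :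
    eval p (dirDeriv (τ, x, v) G) = τ * eval p (dirDeriv (1, 0, 0) G)
      + ∑ a, x a * eval p (dX a G) + ∑ a, v a * eval p (dV a G) := by
  have hsplit : ((τ, x, v) : Jet q) = τ • (1, 0, 0) + ∑ a, x a • (0, Pi.single a 1, 0)
      + ∑ a, v a • (0, 0, Pi.single a 1) := by
    ext <;> simp [Prod.fst_sum, Prod.snd_sum, Finset.sum_apply, Pi.single_apply]
  refine (congr_arg (fderiv ℝ G.extend p) hsplit).trans ?_
  simp only [map_add, map_sum, map_smul, smul_eq_mul]
  rfl

theorem eval_dTot (p : W) : eval p (dTot G)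
    = eval p (dirDeriv (1, 0, 0) G) + ∑ a, p.1.2.2 a * eval p (dX a G) := by
  refine (eval_dirDeriv p 1 p.1.2.2 0).trans ?_
  simp only [one_mul, Pi.zero_apply, zero_mul, Finset.sum_const_zero, add_zero]

namespace Represents

theorem hasDerivAt_comp (h : Represents G F) {γ : ℝ → Jet q} {e : Jet q} {s : ℝ}
    (hγ : HasDerivAt γ e s) {p : W} (hp : γ s = p) :
    HasDerivAt (fun s => F (γ s).1 (γ s).2.1 (γ s).2.2) (eval p (dirDeriv e G)) s :=
  SmoothFun.hasDerivAt_comp (g := fun p : Jet q => F p.1 p.2.1 p.2.2) h hγ hp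

theorem pdx (h : Represents G F) (a : Fin q) : Represents (dX a G) (pdx a F) := fun p =>
  (h.hasDerivAt_comp (s := 0) (p := p) ((hasDerivAt_const 0 p.1.1).prodMk
    ((((hasDerivAt_id (0 : ℝ)).smul_const (Pi.single a 1)).const_add p.1.2.1).prodMk
      (hasDerivAt_const 0 p.1.2.2))) (by simp)).deriv.trans (by rw [one_smul]; rfl)

theorem pdv (h : Represents G F) (a : Fin q) : Represents (dV a G) (pdv a F) := fun p =>
  (h.hasDerivAt_comp (s := 0) (p := p) ((hasDerivAt_const 0 p.1.1).prodMk
    ((hasDerivAt_const 0 p.1.2.1).prodMk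
      (((hasDerivAt_id (0 : ℝ)).smul_const (Pi.single a 1)).const_add p.1.2.2)))
        (by simp)).deriv.trans (by rw [one_smul]; rfl)

theorem D1 (h : Represents G F) : Represents (dTot G) (D1 F) := fun p => by
  have ht : pdt F p.1.1 p.1.2.1 p.1.2.2 = eval p (dirDeriv (1, 0, 0) G) :=
    (h.hasDerivAt_comp (p := p) ((hasDerivAt_id p.1.1).prodMk
      ((hasDerivAt_const _ p.1.2.1).prodMk (hasDerivAt_const _ p.1.2.2))) rfl).deriv
  simp only [_root_.D1, ht, eval_dTot, fun a => h.pdx a p]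

theorem add (h : Represents G F) (h' : Represents G' F') :
    Represents (G + G') fun t x v => F t x v + F' t x v :=
  fun p => congr_arg₂ (· + ·) (h p) (h' p)

theorem sub (h : Represents G F) (h' : Represents G' F') :
    Represents (G - G') fun t x v => F t x v - F' t x v :=
  fun p => congr_arg₂ (· - ·) (h p) (h' p)

theorem div_const (h : Represents G F) (r : ℝ) :
    Represents (r⁻¹ • G) fun t x v => F t x v / r := fun p =>
  (div_eq_inv_mul _ _).trans (congr_arg (r⁻¹ * ·) (h p))

end Represents

section CondOn

variable {A B : Fin q → Fin q → ℝ → (Fin q → ℝ) → (Fin q → ℝ) → ℝ}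
  {c : Fin q → ℝ → (Fin q → ℝ) → (Fin q → ℝ) → ℝ} {A' B' : Fin q → Fin q → SmoothFun W}
  {c' : Fin q → SmoothFun W}

theorem dV_dV_c_of_cond21On (hA : ∀ a b, Represents (A' a b) (A a b))
    (hB : ∀ a b, Represents (B' a b) (B a b)) (hc : ∀ a, Represents (c' a) (c a))
    (hskew : ∀ a b, A' a b = -A' b a) (h : cond21On W A B c) (a b d : Fin q) :
    dV d (dV a (c' b) - dV b (c' a)) - 2 * (dX a (B' b d) - dX b (B' a d))
      + dTot (dTot (dV d (A' a b)))
      + 2 * dTot (dX a (A' b d) + dX b (A' d a) + dX d (A' a b)) = 0 := ext_eval fun p => by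
  have h₅ := (h p p.2 a b d).2.2.2.2.1
  rw [((((hc b).pdv a).sub ((hc a).pdv b)).div_const 2).pdv, (hB b d).pdx, (hB a d).pdx,
    ((hA a b).pdv d).D1.D1, (((((((hA b d).pdx a).sub ((hA a d).pdx b)).sub
      ((hA b a).pdx d)).sub ((hA d b).pdx a)).add ((hA d a).pdx b)).add
        ((hA a b).pdx d) |>.div_const 6).D1, hskew a d, hskew b a, hskew d b] at h₅
  simp only [map_mul, map_sub, map_add, map_ofNat, map_zero, map_neg, Derivation.map_smul,
    map_smul, smul_eq_mul] at h₅ ⊢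
  linarith

theorem isHelmholtz_of_cond21On (hA : ∀ a b, Represents (A' a b) (A a b))
    (hB : ∀ a b, Represents (B' a b) (B a b)) (hc : ∀ a, Represents (c' a) (c a))
    (hskew : ∀ a b t x v, A a b t x v = -A b a t x v) (h : cond21On W A B c) :
    IsHelmholtz A' B' c' := by
  have hskew' (a b) : A' a b = -A' b a := ext_eval fun p => by
    rw [map_neg, ← hA, ← hA, hskew]
  exact
    { skew := hskew'
      dV_A a b d := ext_eval fun p => by
        have h₁ := (h p p.2 a b d).1
        simp only [fun a b d => (hA b d).pdv a p, hskew' a d, hskew' b a, hskew' d b,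
          map_neg] at h₁
        simp only [map_add, map_zero]
        linarith
      B_sub_B a b := ext_eval fun p => by
        have h₂ := (h p p.2 a b a).2.1
        rw [(hA a b).D1, hB, hB] at h₂
        simp only [map_mul, map_sub, map_ofNat]
        linarith
      dV_B a b d := ext_eval fun p => by
        have h₃ := (h p p.2 a b d).2.2.1
        rw [(hB b d).pdv, (hB a d).pdv, (hA b d).pdx, (hA a d).pdx, (hA a b).pdx,
          ((hA a b).pdv d).D1] at h₃
        simp only [map_mul, map_sub, map_add, map_ofNat, map_zero]
        linarith
      dV_c a b := ext_eval fun p => by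
        have h₄ := (h p p.2 a b a).2.2.2.1
        rw [(hc b).pdv, (hc a).pdv, (((hB a b).add (hB b a)).div_const 2).D1] at h₄
        simp only [Derivation.map_smul, map_smul, smul_eq_mul, map_add] at h₄ ⊢
        linarith
      dV_dV_c := dV_dV_c_of_cond21On hA hB hc hskew' h
      dX_c a b := ext_eval fun p => by
        have h₆ := (h p p.2 a b a).2.2.2.2.2
        rw [(hc b).pdx, (hc a).pdx, ((((hc b).pdv a).sub ((hc a).pdv b)).div_const 2).D1,
          (hA a b).D1.D1.D1] at h₆
        simp only [map_mul, map_sub, map_ofNat, map_zero, Derivation.map_smul, map_smul,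
          smul_eq_mul] at h₆ ⊢
        linarith }

end CondOn

end Coordinates

/-! ### The Euler–Poisson expressions of an affine Lagrangian -/

section EulerPoisson

open SmoothFun

variable {q : ℕ} {W : Opens (Jet q)}

/-- The Lagrangian `α_b v'^b + H`, extended by zero outside `W`. -/
def lagrangian (α : Fin q → SmoothFun W) (H : SmoothFun W) (t : ℝ) (x v w : Fin q → ℝ) : ℝ :=
  ∑ b, (α b).extend (t, x, v) * w b + H.extend (t, x, v)

theorem lagrangian_apply (α : Fin q → SmoothFun W) (H : SmoothFun W) (p : W) (w : Fin q → ℝ) :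
    lagrangian α H p.1.1 p.1.2.1 p.1.2.2 w = ∑ b, eval p (α b) * w b + eval p H := by
  simp only [lagrangian, ← extend_eq_eval]

theorem contDiffOn_lagrangian (α : Fin q → SmoothFun W) (H : SmoothFun W) :
    ContDiffOn ℝ ∞ (fun p : ℝ × (Fin q → ℝ) × (Fin q → ℝ) × (Fin q → ℝ) =>
      lagrangian α H p.1 p.2.1 p.2.2.1 p.2.2.2) {p | (p.1, p.2.1, p.2.2.1) ∈ W} := by
  have hextend (G : SmoothFun W) := G.contDiffOn_extend.comp
    (f := fun p : ℝ × (Fin q → ℝ) × (Fin q → ℝ) × (Fin q → ℝ) => (p.1, p.2.1, p.2.2.1))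
    (s := {p : ℝ × (Fin q → ℝ) × (Fin q → ℝ) × (Fin q → ℝ) | (p.1, p.2.1, p.2.2.1) ∈ W})
    (by fun_prop) fun _ hp => hp
  refine (ContDiffOn.sum fun b _ => (hextend (α b)).mul ?_).add (hextend H)
  fun_prop

theorem hasDerivAt_lagrangian_comp (α : Fin q → SmoothFun W) (H : SmoothFun W) {γ : ℝ → Jet q}
    {w : ℝ → Fin q → ℝ} {e : Jet q} {w' : Fin q → ℝ} {s : ℝ} (hγ : HasDerivAt γ e s)
    (hw : HasDerivAt w w' s) {p : W} (hp : γ s = p) :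
    HasDerivAt (fun s => lagrangian α H (γ s).1 (γ s).2.1 (γ s).2.2 (w s))
      (∑ b, (eval p (dirDeriv e (α b)) * w s b + eval p (α b) * w' b)
        + eval p (dirDeriv e H)) s := by
  have h (G : SmoothFun W) := G.hasDerivAt_comp G.extend_apply hγ hp
  simp only [← fun b => extend_eq_eval (α b) p, ← hp]
  refine (HasDerivAt.fun_sum fun b _ => ?_).add (h H)
  exact (h (α b)).mul (hasDerivAt_pi.1 hw b)

theorem pLx_lagrangian (a : Fin q) (α : Fin q → SmoothFun W) (H : SmoothFun W) (p : W)
    (w : Fin q → ℝ) : pLx a (lagrangian α H) p.1.1 p.1.2.1 p.1.2.2 w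
      = lagrangian (fun b => dX a (α b)) (dX a H) p.1.1 p.1.2.1 p.1.2.2 w := by
  refine (hasDerivAt_lagrangian_comp (s := 0) (p := p) α H ((hasDerivAt_const 0 p.1.1).prodMk
    ((((hasDerivAt_id (0 : ℝ)).smul_const (Pi.single a 1)).const_add p.1.2.1).prodMk
      (hasDerivAt_const 0 p.1.2.2))) (hasDerivAt_const 0 w) (by simp)).deriv.trans ?_
  simp only [one_smul, Pi.zero_apply, mul_zero, add_zero, lagrangian_apply]
  rfl

theorem pLv_lagrangian (a : Fin q) (α : Fin q → SmoothFun W) (H : SmoothFun W) (p : W)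
    (w : Fin q → ℝ) : pLv a (lagrangian α H) p.1.1 p.1.2.1 p.1.2.2 w
      = lagrangian (fun b => dV a (α b)) (dV a H) p.1.1 p.1.2.1 p.1.2.2 w := by
  refine (hasDerivAt_lagrangian_comp (s := 0) (p := p) α H ((hasDerivAt_const 0 p.1.1).prodMk
    ((hasDerivAt_const 0 p.1.2.1).prodMk
      (((hasDerivAt_id (0 : ℝ)).smul_const (Pi.single a 1)).const_add p.1.2.2)))
        (hasDerivAt_const 0 w) (by simp)).deriv.trans ?_
  simp only [one_smul, Pi.zero_apply, mul_zero, add_zero, lagrangian_apply]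
  rfl

theorem pLw_lagrangian (a : Fin q) (α : Fin q → SmoothFun W) (H : SmoothFun W) (p : W)
    (w : Fin q → ℝ) : pLw a (lagrangian α H) p.1.1 p.1.2.1 p.1.2.2 w = eval p (α a) := by
  refine (hasDerivAt_lagrangian_comp (s := 0) (p := p) α H (hasDerivAt_const 0 p.1)
    (((hasDerivAt_id (0 : ℝ)).smul_const (Pi.single a 1)).const_add w) rfl).deriv.trans ?_
  simp [dirDeriv_zero, Pi.single_apply]

/-- The lift `t ↦ (t, c(t), ċ(t))` of a curve. -/
def lift (c : ℝ → Fin q → ℝ) (t : ℝ) : Jet q := (t, c t, deriv c t)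

variable {c : ℝ → Fin q → ℝ} {t : ℝ}

theorem hasDerivAt_lift (hc : ContDiffAt ℝ 2 c t) :
    HasDerivAt (lift c) (1, deriv c t, deriv (deriv c) t) t :=
  (hasDerivAt_id t).prodMk ((hc.differentiableAt (by simp)).hasDerivAt.prodMk
    ((hc.derivWithin (m := 1) (by norm_num)).differentiableAt (by simp)).hasDerivAt)

theorem eval_dirDeriv_lift (w : Fin q → ℝ) (p : W) (G : SmoothFun W) :
    eval p (dirDeriv (1, p.1.2.2, w) G)
      = lagrangian (fun b => dV b G) (dTot G) p.1.1 p.1.2.1 p.1.2.2 w := by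
  rw [eval_dirDeriv, lagrangian_apply, eval_dTot]
  simp only [one_mul, mul_comm]
  ring

theorem hasDerivAt_extend_lift (hc : ContDiffAt ℝ 2 c t) (hW : lift c t ∈ W) (G : SmoothFun W) :
    HasDerivAt (fun τ => G.extend (lift c τ))
      (lagrangian (fun b => dV b G) (dTot G) t (c t) (deriv c t) (deriv (deriv c) t)) t := by
  have h := G.hasDerivAt_comp G.extend_apply (hasDerivAt_lift hc) (p := ⟨lift c t, hW⟩) rfl
  exact h.congr_deriv (eval_dirDeriv_lift (deriv (deriv c) t) ⟨lift c t, hW⟩ G)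

theorem hasDerivAt_lagrangian_lift (hc : ContDiffAt ℝ 3 c t) (hW : lift c t ∈ W)
    (α : Fin q → SmoothFun W) (H : SmoothFun W) :
    HasDerivAt (fun τ => lagrangian α H τ (c τ) (deriv c τ) (deriv (deriv c) τ))
      (∑ b, eval ⟨lift c t, hW⟩ (α b) * deriv (deriv (deriv c)) t b
        + ∑ d, ∑ b, deriv (deriv c) t d * eval ⟨lift c t, hW⟩ (dV d (α b)) * deriv (deriv c) t b
        + ∑ b, eval ⟨lift c t, hW⟩ (dTot (α b) + dV b H) * deriv (deriv c) t b
        + eval ⟨lift c t, hW⟩ (dTot H)) t := by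
  have hacc : HasDerivAt (deriv (deriv c)) (deriv (deriv (deriv c)) t) t :=
    (((hc.derivWithin (m := 2) (by norm_num)).derivWithin (m := 1)
      (by norm_num)).differentiableAt (by simp)).hasDerivAt
  refine (hasDerivAt_lagrangian_comp α H (hasDerivAt_lift (hc.of_le (by norm_num))) hacc
    (p := ⟨lift c t, hW⟩) rfl).congr_deriv ?_
  have h (G : SmoothFun W) := (eval_dirDeriv_lift (deriv (deriv c) t) ⟨lift c t, hW⟩ G).trans
    (lagrangian_apply _ _ _ _)
  dsimp only [lift] at h ⊢
  rw [Finset.sum_comm]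
  simp only [h, map_add, add_mul, Finset.sum_mul, Finset.sum_add_distrib,
    mul_comm (deriv (deriv c) t _)]
  ring

theorem eventually_lift_mem (hc : ContDiffAt ℝ 3 c t) (hW : lift c t ∈ W) :
    ∀ᶠ τ in 𝓝 t, ContDiffAt ℝ 3 c τ ∧ lift c τ ∈ W :=
  (hc.eventually (by simp)).and ((hasDerivAt_lift (hc.of_le (by norm_num))).continuousAt.eventually
    (W.isOpen.mem_nhds hW))

theorem eulerPoisson_lagrangian (hc : ContDiffAt ℝ 3 c t) (hW : lift c t ∈ W)
    (α : Fin q → SmoothFun W) (H : SmoothFun W) (a : Fin q) :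
    eulerPoisson (lagrangian α H) c t a
      = ∑ b, eval ⟨lift c t, hW⟩ (lagrangianA α a b) * deriv (deriv (deriv c)) t b
        + ∑ d, ∑ b, deriv (deriv c) t d * eval ⟨lift c t, hW⟩ (dV d (lagrangianA α a b))
          * deriv (deriv c) t b
        + ∑ b, eval ⟨lift c t, hW⟩ (lagrangianB α H a b) * deriv (deriv c) t b
        + eval ⟨lift c t, hW⟩ (lagrangianC α H a) := by
  have hnear := eventually_lift_mem hc hW
  have hv : (fun τ => pLv a (lagrangian α H) τ (c τ) (deriv c τ) (deriv (deriv c) τ)) =ᶠ[𝓝 t]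
      fun τ => lagrangian (fun b => dV a (α b)) (dV a H) τ (c τ) (deriv c τ) (deriv (deriv c) τ) :=
    hnear.mono fun τ hτ => pLv_lagrangian a α H ⟨lift c τ, hτ.2⟩ _
  have hw : (fun τ => pLw a (lagrangian α H) τ (c τ) (deriv c τ) (deriv (deriv c) τ)) =ᶠ[𝓝 t]
      fun τ => (α a).extend (lift c τ) :=
    hnear.mono fun τ hτ => (pLw_lagrangian a α H ⟨lift c τ, hτ.2⟩ _).trans
      (extend_eq_eval (α a) ⟨lift c τ, hτ.2⟩).symm
  have hw' : deriv (fun τ => (α a).extend (lift c τ)) =ᶠ[𝓝 t] fun τ =>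
      lagrangian (fun b => dV b (α a)) (dTot (α a)) τ (c τ) (deriv c τ) (deriv (deriv c) τ) :=
    hnear.mono fun τ hτ =>
      (hasDerivAt_extend_lift (hτ.1.of_le (by norm_num)) hτ.2 (α a)).deriv
  rw [eulerPoisson, hv.deriv_eq, (hw.deriv.trans hw').deriv_eq,
    (hasDerivAt_lagrangian_lift hc hW _ _).deriv, (hasDerivAt_lagrangian_lift hc hW _ _).deriv]
  have hx := pLx_lagrangian a α H ⟨lift c t, hW⟩ (deriv (deriv c) t)
  have hl (β K) := lagrangian_apply (W := W) β K ⟨lift c t, hW⟩ (deriv (deriv c) t)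
  dsimp only [lift] at hx hl ⊢
  rw [hx]
  simp only [hl, lagrangianA, lagrangianB, lagrangianC, map_sub, map_add, dV_dTot, dV_comm a _ H,
    add_mul, sub_mul, mul_sub, Finset.sum_add_distrib, Finset.sum_sub_distrib]
  ring

theorem expr20_eq {A B : Fin q → Fin q → ℝ → (Fin q → ℝ) → (Fin q → ℝ) → ℝ}
    {C : Fin q → ℝ → (Fin q → ℝ) → (Fin q → ℝ) → ℝ} {A' B' : Fin q → Fin q → SmoothFun W}
    {C' : Fin q → SmoothFun W} (hA : ∀ a b, Represents (A' a b) (A a b))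
    (hB : ∀ a b, Represents (B' a b) (B a b)) (hC : ∀ a, Represents (C' a) (C a)) (a : Fin q)
    (p : W) (w w' : Fin q → ℝ) : expr20 A B C a p.1.1 p.1.2.1 p.1.2.2 w w'
      = ∑ b, eval p (A' a b) * w' b + ∑ d, ∑ b, w d * eval p (dV d (A' a b)) * w b
        + ∑ b, eval p (B' a b) * w b + eval p (C' a) := by
  simp only [expr20, hA a _ p, hB a _ p, hC a p, fun d b => (hA a b).pdv d p]

end EulerPoisson

end

end Helmholtz

open Helmholtz

/-- Sufficiency of the Helmholtz-type conditions (21): a third-order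
expression of the form (20) built from a smooth triple `(A,B,c)` on an open set
`Ω ⊆ ℝ × ℝ^q × ℝ^q`, with `A` skew-symmetric and satisfying conditions (21), is
locally variational. -/
theorem helmholtz_conditions_sufficient {q : ℕ}
    (Ω : Set (ℝ × (Fin q → ℝ) × (Fin q → ℝ))) (hΩ : IsOpen Ω)
    (A B : Fin q → Fin q → ℝ → (Fin q → ℝ) → (Fin q → ℝ) → ℝ)
    (cc : Fin q → ℝ → (Fin q → ℝ) → (Fin q → ℝ) → ℝ)
    (hA : ∀ a b, ContDiffOn ℝ (⊤ : ℕ∞)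
      (fun p : ℝ × (Fin q → ℝ) × (Fin q → ℝ) => A a b p.1 p.2.1 p.2.2) Ω)
    (hB : ∀ a b, ContDiffOn ℝ (⊤ : ℕ∞)
      (fun p : ℝ × (Fin q → ℝ) × (Fin q → ℝ) => B a b p.1 p.2.1 p.2.2) Ω)
    (hc : ∀ a, ContDiffOn ℝ (⊤ : ℕ∞)
      (fun p : ℝ × (Fin q → ℝ) × (Fin q → ℝ) => cc a p.1 p.2.1 p.2.2) Ω)
    (hskew : ∀ a b t x v, A a b t x v = - A b a t x v)
    (h21 : cond21On Ω A B cc) :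
    ∀ t₀ : ℝ, ∀ x₀ v₀ v'₀ : Fin q → ℝ, (t₀, x₀, v₀) ∈ Ω →
    ∃ U : Set (ℝ × (Fin q → ℝ) × (Fin q → ℝ) × (Fin q → ℝ)),
      IsOpen U ∧ (t₀, x₀, v₀, v'₀) ∈ U ∧ (∀ p ∈ U, (p.1, p.2.1, p.2.2.1) ∈ Ω) ∧
      ∃ L : ℝ → (Fin q → ℝ) → (Fin q → ℝ) → (Fin q → ℝ) → ℝ,
        ContDiffOn ℝ (⊤ : ℕ∞)
          (fun p : ℝ × (Fin q → ℝ) × (Fin q → ℝ) × (Fin q → ℝ) =>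
            L p.1 p.2.1 p.2.2.1 p.2.2.2) U ∧
        ∀ I : Set ℝ, IsOpen I → ∀ c : ℝ → (Fin q → ℝ), ContDiffOn ℝ (⊤ : ℕ∞) c I →
          (∀ t ∈ I, (t, c t, deriv c t, deriv (deriv c) t) ∈ U) →
          ∀ t ∈ I, ∀ a : Fin q,
            eulerPoisson L c t a
              = expr20 A B cc a t (c t) (deriv c t) (deriv (deriv c) t)
                  (deriv (deriv (deriv c)) t) := by
  intro t₀ x₀ v₀ v'₀ h₀
  obtain ⟨r, hr, hΩr⟩ := exists_cylinder_subset hΩ h₀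
  set W := cylinder (t₀, x₀, v₀) r
  have hA' (a b) := represents_restrict (W := W) ((hA a b).mono hΩr)
  have hB' (a b) := represents_restrict (W := W) ((hB a b).mono hΩr)
  have hc' (a) := represents_restrict (W := W) ((hc a).mono hΩr)
  obtain ⟨α, H, hα, hβ, hγ⟩ := (isHelmholtz_of_cond21On hA' hB' hc' hskew
    fun p hp => h21 p (hΩr hp)).exists_lagrangian
  refine ⟨{p | (p.1, p.2.1, p.2.2.1) ∈ W}, W.isOpen.preimage (by fun_prop),
    mem_cylinder_self _ hr, fun p hp => hΩr hp, lagrangian α H, contDiffOn_lagrangian α H, ?_⟩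
  intro I hI c hcI hU t ht a
  have hct : ContDiffAt ℝ 3 c t :=
    (hcI.contDiffAt (hI.mem_nhds ht)).of_le ENat.LEInfty.out
  rw [eulerPoisson_lagrangian hct (hU t ht), hα, hβ, hγ]
  exact (expr20_eq hA' hB' hc' a ⟨lift c t, hU t ht⟩ _ _).symm
end

section
/- Correspondence between a variational problem and its parametric counterpart (equations (29)–(30)): let q ≥ 1 and let L = L(t,x,v,v′) be a smooth function on ℝ × ℝ^q × ℝ^q × ℝ^q. Define ℒ on {(x,u,u̇) ∈ ℝ^{1+q} × ℝ^{1+q} × ℝ^{1+q} : u⁰ > 0} by ℒ(x,u,u̇) = u⁰ · L( x⁰, (x^a), (u^a/u⁰), ((u̇^a u⁰ − u^a u̇⁰)/(u⁰)³) ), i.e. ℒ = u⁰ (L ∘ ℘). Let γ = (x⁰, 𝐱) : ℝ → ℝ^{1+q} be a smooth curve with ẋ⁰(τ) > 0 for all τ, let φ be the inverse function of τ ↦ x⁰(τ), and let c = 𝐱 ∘ φ be the reparametrization of the spatial part by the variable t = x⁰. Then for all τ and all a = 1,…,q: 𝓔_a[ℒ,γ](τ) = ẋ⁰(τ) · E_a[L,c](x⁰(τ)),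 and 𝓔₀[ℒ,γ](τ) = − Σ_{a=1}^{q} ẋ^a(τ) · E_a[L,c](x⁰(τ)). -/
noncomputable section

/-- Partial derivative in `x^ρ` of an autonomous first-order Lagrange function
`ℓ(x,u,u̇)` on `ℝ^n × ℝ^n × ℝ^n`. -/
def pAx {n : ℕ} (ρ : Fin n) (ℓ : (Fin n → ℝ) → (Fin n → ℝ) → (Fin n → ℝ) → ℝ)
    (x u w : Fin n → ℝ) : ℝ :=
  deriv (fun s : ℝ => ℓ (x + s • (Pi.single ρ 1 : Fin n → ℝ)) u w) 0

/-- Partial derivative in `u^ρ` of `ℓ(x,u,u̇)`. -/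
def pAu {n : ℕ} (ρ : Fin n) (ℓ : (Fin n → ℝ) → (Fin n → ℝ) → (Fin n → ℝ) → ℝ)
    (x u w : Fin n → ℝ) : ℝ :=
  deriv (fun s : ℝ => ℓ x (u + s • (Pi.single ρ 1 : Fin n → ℝ)) w) 0

/-- Partial derivative in `u̇^ρ` of `ℓ(x,u,u̇)`. -/
def pAw {n : ℕ} (ρ : Fin n) (ℓ : (Fin n → ℝ) → (Fin n → ℝ) → (Fin n → ℝ) → ℝ)
    (x u w : Fin n → ℝ) : ℝ :=
  deriv (fun s : ℝ => ℓ x u (w + s • (Pi.single ρ 1 : Fin n → ℝ))) 0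

/-- The Euler–Lagrange (Euler–Poisson) expressions
`𝓔_ρ[ℓ,γ](τ) = ∂ℓ/∂x^ρ − (d/dτ)(∂ℓ/∂u^ρ) + (d²/dτ²)(∂ℓ/∂u̇^ρ)` of an autonomous
first-order Lagrange function `ℓ(x,u,u̇)` along a curve `γ`, all partial derivatives
evaluated along `τ ↦ (γ(τ), γ̇(τ), γ̈(τ))`. -/
def eulerLagrange {n : ℕ} (ℓ : (Fin n → ℝ) → (Fin n → ℝ) → (Fin n → ℝ) → ℝ)
    (γ : ℝ → (Fin n → ℝ)) (τ : ℝ) (ρ : Fin n) : ℝ :=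
  pAx ρ ℓ (γ τ) (deriv γ τ) (deriv (deriv γ) τ)
    - deriv (fun σ => pAu ρ ℓ (γ σ) (deriv γ σ) (deriv (deriv γ) σ)) τ
    + deriv (deriv (fun σ => pAw ρ ℓ (γ σ) (deriv γ σ) (deriv (deriv γ) σ))) τ

/-- The parametric Lagrange function `ℒ = u⁰ · (L ∘ ℘)` of equation (30), defined from a
second-order Lagrange function `L(t,x,v,v′)` via the projection
`℘ : (x,u,u̇) ↦ (t = x⁰, x^a, v^a = u^a/u⁰, v′^a = (u̇^a u⁰ − u^a u̇⁰)/(u⁰)³)`. -/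
def paramLagrangian {q : ℕ}
    (L : ℝ → (Fin q → ℝ) → (Fin q → ℝ) → (Fin q → ℝ) → ℝ) :
    (Fin (q + 1) → ℝ) → (Fin (q + 1) → ℝ) → (Fin (q + 1) → ℝ) → ℝ :=
  fun x u du =>
    u 0 * L (x 0) (fun a : Fin q => x a.succ) (fun a : Fin q => u a.succ / u 0)
      (fun a : Fin q => (du a.succ * u 0 - u a.succ * du 0) / (u 0) ^ 3)

/-!
By the inverse function theorem `c` is smooth, and `℘` carries the second jet of `γ` at `τ` to the
second jet of the graph of `c` at `x⁰(τ)`. Writing `𝓔 = ∂ℓ/∂x - dp/dτ` with the Ostrogradsky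
momentum `p = ∂ℓ/∂u - d/dτ (∂ℓ/∂u̇)`, one finds that the spatial momenta of `ℒ` are those of `L`
read at time `x⁰(τ)`, so the spatial formula is the chain rule for `d/dτ = ẋ⁰ d/dt`. The formula
for `𝓔₀` is then Noether's identity `∑ ẋ^ρ 𝓔_ρ = 0`: in general `∑ ẋ^ρ 𝓔_ρ = -dH/dτ` for the
Ostrogradsky energy `H`, and the Zermelo conditions, which express the parameter invariance of
`ℒ`, make `H` vanish.
-/

open Filter Topology

section Calculus

variable {E F : Type*} [NormedAddCommGroup E] [NormedSpace ℝ E]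
  [NormedAddCommGroup F] [NormedSpace ℝ F] {n : WithTop ℕ∞}

lemma contDiffAt_of_comp_of_deriv_ne_zero {T : ℝ → ℝ} {c : ℝ → E} {τ : ℝ} (hn : n ≠ 0)
    (hT : ContDiffAt ℝ n T τ) (hT' : deriv T τ ≠ 0) (hc : ContDiffAt ℝ n (c ∘ T) τ) :
    ContDiffAt ℝ n c (T τ) := by
  have hderiv : HasFDerivAt T
      (ContinuousLinearEquiv.unitsEquivAut ℝ (Units.mk0 _ hT') : ℝ →L[ℝ] ℝ) τ :=
    (hT.differentiableAt hn).hasDerivAt.hasFDerivAt_equiv hT'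
  have hsymm : ContDiffAt ℝ n ((c ∘ T) ∘ hT.localInverse hderiv hn) (T τ) :=
    ContDiffAt.comp _ (by rwa [hT.localInverse_apply_image]) (hT.to_localInverse hderiv hn)
  refine hsymm.congr_of_eventuallyEq ?_
  filter_upwards [(hT.hasStrictFDerivAt' hderiv hn).eventually_right_inverse] with t ht
  exact congrArg c ht.symm

lemma contDiffAt_lineDeriv_comp {f : E → F} {j : ℝ → E} {τ : ℝ}
    (hf : ContDiffAt ℝ (n + 1) f (j τ)) (hj : ContDiffAt ℝ n j τ) (e : E) :
    ContDiffAt ℝ n (fun σ => lineDeriv ℝ f (j σ) e) τ := by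
  have hdiff : ∀ᶠ σ in 𝓝 τ, DifferentiableAt ℝ f (j σ) := by
    refine hj.continuousAt.eventually ?_
    filter_upwards [(hf.of_le le_add_self).eventually (by simp)] with p hp
    exact hp.differentiableAt one_ne_zero
  refine (((hf.fderiv_right le_rfl).comp τ hj).clm_apply
    (contDiffAt_const (c := e))).congr_of_eventuallyEq ?_
  filter_upwards [hdiff] with σ hσ
  exact hσ.lineDeriv_eq_fderiv

/-- The second-order prolongation `σ ↦ (γ, γ̇, γ̈)` of a curve. -/
def secondJet (γ : ℝ → E) (σ : ℝ) : E × E × E :=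
  (γ σ, deriv γ σ, deriv (deriv γ) σ)

lemma contDiffAt_secondJet {γ : ℝ → E} {τ : ℝ} (hγ : ContDiffAt ℝ (n + 2) γ τ) :
    ContDiffAt ℝ n (secondJet γ) τ := by
  have hγ' : ContDiffAt ℝ (n + 1) (deriv γ) τ :=
    hγ.derivWithin (by rw [add_assoc, one_add_one_eq_two])
  exact (hγ.of_le le_self_add).prodMk
    ((hγ'.of_le le_self_add).prodMk (hγ'.derivWithin le_rfl))

end Calculus

section Autonomous

variable {n : ℕ} {ℓ : (Fin n → ℝ) → (Fin n → ℝ) → (Fin n → ℝ) → ℝ} {x u w : Fin n → ℝ}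
  {γ : ℝ → Fin n → ℝ} {τ : ℝ}

lemma pAx_eq_lineDeriv (ρ : Fin n) :
    pAx ρ ℓ x u w = lineDeriv ℝ ↿ℓ (x, u, w) (Pi.single ρ 1, 0, 0) := by
  simp [pAx, lineDeriv, Function.HasUncurry.uncurry]

lemma pAu_eq_lineDeriv (ρ : Fin n) :
    pAu ρ ℓ x u w = lineDeriv ℝ ↿ℓ (x, u, w) (0, Pi.single ρ 1, 0) := by
  simp [pAu, lineDeriv, Function.HasUncurry.uncurry]

lemma pAw_eq_lineDeriv (ρ : Fin n) :
    pAw ρ ℓ x u w = lineDeriv ℝ ↿ℓ (x, u, w) (0, 0, Pi.single ρ 1) := by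
  simp [pAw, lineDeriv, Function.HasUncurry.uncurry]

lemma fderiv_uncurry_eq_sum (hℓ : DifferentiableAt ℝ ↿ℓ (x, u, w)) (x' u' w' : Fin n → ℝ) :
    fderiv ℝ ↿ℓ (x, u, w) (x', u', w') =
      ∑ ρ, (x' ρ * pAx ρ ℓ x u w + u' ρ * pAu ρ ℓ x u w + w' ρ * pAw ρ ℓ x u w) := by
  have hsum : (x', u', w') = ∑ ρ, (x' ρ • (Pi.single ρ 1, 0, 0) + u' ρ • (0, Pi.single ρ 1, 0)
      + w' ρ • (0, 0, Pi.single ρ 1) : (Fin n → ℝ) × (Fin n → ℝ) × (Fin n → ℝ)) := by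
    simp only [Prod.smul_mk, smul_zero, Prod.mk_add_mk, add_zero, zero_add]
    ext i <;> simp [Prod.fst_sum, Prod.snd_sum, Pi.single_apply]
  rw [hsum]
  simp only [map_sum, map_add, map_smul, smul_eq_mul, pAx_eq_lineDeriv, pAu_eq_lineDeriv,
    pAw_eq_lineDeriv, hℓ.lineDeriv_eq_fderiv]

lemma contDiffAt_pAu_secondJet (hℓ : ContDiffAt ℝ 3 ↿ℓ (secondJet γ τ))
    (hγ : ContDiffAt ℝ 4 γ τ) (ρ : Fin n) :
    ContDiffAt ℝ 2 (fun σ => pAu ρ ℓ (γ σ) (deriv γ σ) (deriv (deriv γ) σ)) τ := by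
  simp only [pAu_eq_lineDeriv]
  exact contDiffAt_lineDeriv_comp (j := secondJet γ) (hℓ.of_le (by norm_num))
    (contDiffAt_secondJet (hγ.of_le (by norm_num))) _

lemma contDiffAt_pAw_secondJet (hℓ : ContDiffAt ℝ 3 ↿ℓ (secondJet γ τ))
    (hγ : ContDiffAt ℝ 4 γ τ) (ρ : Fin n) :
    ContDiffAt ℝ 2 (fun σ => pAw ρ ℓ (γ σ) (deriv γ σ) (deriv (deriv γ) σ)) τ := by
  simp only [pAw_eq_lineDeriv]
  exact contDiffAt_lineDeriv_comp (j := secondJet γ) (hℓ.of_le (by norm_num))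
    (contDiffAt_secondJet (hγ.of_le (by norm_num))) _

/-- The Ostrogradsky momentum `p_ρ = ∂ℓ/∂u^ρ - d/dτ (∂ℓ/∂u̇^ρ)` along a curve. -/
def ostrogradskyMomentum (ℓ : (Fin n → ℝ) → (Fin n → ℝ) → (Fin n → ℝ) → ℝ) (γ : ℝ → Fin n → ℝ)
    (ρ : Fin n) (σ : ℝ) : ℝ :=
  pAu ρ ℓ (γ σ) (deriv γ σ) (deriv (deriv γ) σ)
    - deriv (fun σ => pAw ρ ℓ (γ σ) (deriv γ σ) (deriv (deriv γ) σ)) σ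

/-- The Ostrogradsky energy `H = ∑ (u^ρ p_ρ + u̇^ρ ∂ℓ/∂u̇^ρ) - ℓ` along a curve. -/
def ostrogradskyEnergy (ℓ : (Fin n → ℝ) → (Fin n → ℝ) → (Fin n → ℝ) → ℝ) (γ : ℝ → Fin n → ℝ)
    (σ : ℝ) : ℝ :=
  ∑ ρ, (deriv γ σ ρ * ostrogradskyMomentum ℓ γ ρ σ
      + deriv (deriv γ) σ ρ * pAw ρ ℓ (γ σ) (deriv γ σ) (deriv (deriv γ) σ))
    - ℓ (γ σ) (deriv γ σ) (deriv (deriv γ) σ)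

lemma contDiffAt_ostrogradskyMomentum (hℓ : ContDiffAt ℝ 3 ↿ℓ (secondJet γ τ))
    (hγ : ContDiffAt ℝ 4 γ τ) (ρ : Fin n) : ContDiffAt ℝ 1 (ostrogradskyMomentum ℓ γ ρ) τ :=
  ((contDiffAt_pAu_secondJet hℓ hγ ρ).of_le one_le_two).sub
    ((contDiffAt_pAw_secondJet hℓ hγ ρ).derivWithin one_add_one_eq_two.le)

lemma eulerLagrange_eq_pAx_sub_deriv_ostrogradskyMomentum
    (hℓ : ContDiffAt ℝ 3 ↿ℓ (secondJet γ τ)) (hγ : ContDiffAt ℝ 4 γ τ) (ρ : Fin n) :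
    eulerLagrange ℓ γ τ ρ =
      pAx ρ ℓ (γ τ) (deriv γ τ) (deriv (deriv γ) τ) - deriv (ostrogradskyMomentum ℓ γ ρ) τ := by
  have hQ' : ContDiffAt ℝ 1 (deriv fun σ => pAw ρ ℓ (γ σ) (deriv γ σ) (deriv (deriv γ) σ)) τ :=
    (contDiffAt_pAw_secondJet hℓ hγ ρ).derivWithin one_add_one_eq_two.le
  unfold eulerLagrange ostrogradskyMomentum
  rw [deriv_fun_sub ((contDiffAt_pAu_secondJet hℓ hγ ρ).differentiableAt two_ne_zero)
    (hQ'.differentiableAt one_ne_zero)]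
  ring

lemma hasDerivAt_apply_of_contDiffAt {m : WithTop ℕ∞} (hm : m ≠ 0) (hγ : ContDiffAt ℝ m γ τ)
    (ρ : Fin n) : HasDerivAt (fun σ => γ σ ρ) (deriv γ τ ρ) τ :=
  hasDerivAt_pi.1 (hγ.differentiableAt hm).hasDerivAt ρ

theorem hasDerivAt_ostrogradskyEnergy (hℓ : ContDiffAt ℝ 3 ↿ℓ (secondJet γ τ))
    (hγ : ContDiffAt ℝ 4 γ τ) :
    HasDerivAt (ostrogradskyEnergy ℓ γ) (-∑ ρ, deriv γ τ ρ * eulerLagrange ℓ γ τ ρ) τ := by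
  have hγ' : ContDiffAt ℝ 3 (deriv γ) τ := hγ.derivWithin (by norm_num)
  have hγ'' : ContDiffAt ℝ 2 (deriv (deriv γ)) τ := hγ'.derivWithin (by norm_num)
  have hp ρ : HasDerivAt (ostrogradskyMomentum ℓ γ ρ) (deriv (ostrogradskyMomentum ℓ γ ρ) τ) τ :=
    ((contDiffAt_ostrogradskyMomentum hℓ hγ ρ).differentiableAt one_ne_zero).hasDerivAt
  have hQ ρ := ((contDiffAt_pAw_secondJet hℓ hγ ρ).differentiableAt two_ne_zero).hasDerivAt
  have hℓ_diff : DifferentiableAt ℝ ↿ℓ (secondJet γ τ) := hℓ.differentiableAt three_ne_zero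
  have hℓ_curve : HasDerivAt (fun σ => ℓ (γ σ) (deriv γ σ) (deriv (deriv γ) σ))
      (fderiv ℝ ↿ℓ (secondJet γ τ) (deriv γ τ, deriv (deriv γ) τ, deriv (deriv (deriv γ)) τ)) τ :=
    hℓ_diff.hasFDerivAt.comp_hasDerivAt τ <|
      (hγ.differentiableAt four_ne_zero).hasDerivAt.prodMk <|
      (hγ'.differentiableAt three_ne_zero).hasDerivAt.prodMk
      (hγ''.differentiableAt two_ne_zero).hasDerivAt
  refine ((HasDerivAt.fun_sum fun ρ _ =>
    ((hasDerivAt_apply_of_contDiffAt three_ne_zero hγ' ρ).fun_mul (hp ρ)).fun_add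
      ((hasDerivAt_apply_of_contDiffAt two_ne_zero hγ'' ρ).fun_mul (hQ ρ))).fun_sub
    hℓ_curve).congr_deriv ?_
  rw [secondJet, fderiv_uncurry_eq_sum hℓ_diff, ← Finset.sum_sub_distrib, ← Finset.sum_neg_distrib]
  refine Finset.sum_congr rfl fun ρ _ => ?_
  rw [eulerLagrange_eq_pAx_sub_deriv_ostrogradskyMomentum hℓ hγ, ostrogradskyMomentum]
  ring

/-- Parameter invariance of a Lagrange function: under a reparametrization with first and second
derivatives `r > 0` and `k`, the velocity and acceleration become `r u` and `r² u̇ + k u`. -/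
def IsParameterInvariant (ℓ : (Fin n → ℝ) → (Fin n → ℝ) → (Fin n → ℝ) → ℝ) : Prop :=
  ∀ (x u w : Fin n → ℝ) (r k : ℝ), 0 < r → ℓ x (r • u) (r ^ 2 • w + k • u) = r * ℓ x u w

namespace IsParameterInvariant

/- The two Zermelo conditions are the derivatives of the invariance relation in `k` at `0` and in
`r` at `1`. -/

lemma sum_mul_pAw (hinv : IsParameterInvariant ℓ) (hℓ : DifferentiableAt ℝ ↿ℓ (x, u, w)) :
    ∑ ρ, u ρ * pAw ρ ℓ x u w = 0 := by
  have hconst (k : ℝ) : ↿ℓ ((x, u, w) + k • (0, 0, u)) = ℓ x u w := by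
    simpa [Function.HasUncurry.uncurry] using hinv x u w 1 k one_pos
  have hline : lineDeriv ℝ ↿ℓ (x, u, w) (0, 0, u) = 0 := by
    simp only [lineDeriv, hconst, deriv_const]
  rw [hℓ.lineDeriv_eq_fderiv, fderiv_uncurry_eq_sum hℓ] at hline
  simpa only [Pi.zero_apply, zero_mul, zero_add] using hline

lemma sum_mul_pAu_add_two_mul_pAw (hinv : IsParameterInvariant ℓ)
    (hℓ : DifferentiableAt ℝ ↿ℓ (x, u, w)) :
    ∑ ρ, (u ρ * pAu ρ ℓ x u w + 2 * w ρ * pAw ρ ℓ x u w) = ℓ x u w := by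
  have hscale : HasDerivAt (fun r : ℝ => (x, r • u, r ^ 2 • w)) (0, u, (2 : ℝ) • w) 1 := by
    refine (hasDerivAt_const _ _).prodMk (HasDerivAt.prodMk ?_ ?_)
    · simpa using (hasDerivAt_id (1 : ℝ)).smul_const u
    · simpa using (hasDerivAt_pow 2 (1 : ℝ)).smul_const w
  have hchain : HasDerivAt (fun r : ℝ => ℓ x (r • u) (r ^ 2 • w))
      (fderiv ℝ ↿ℓ (x, u, w) (0, u, (2 : ℝ) • w)) 1 :=
    hℓ.hasFDerivAt.comp_hasDerivAt_of_eq 1 hscale (by simp)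
  have hhom : (fun r : ℝ => ℓ x (r • u) (r ^ 2 • w)) =ᶠ[𝓝 1] fun r => r * ℓ x u w := by
    filter_upwards [lt_mem_nhds one_pos] with r hr
    simpa using hinv x u w r 0 hr
  have hvalue := (hchain.congr_of_eventuallyEq hhom.symm).unique
    ((hasDerivAt_id (1 : ℝ)).mul_const (ℓ x u w))
  rw [fderiv_uncurry_eq_sum hℓ] at hvalue
  simpa using hvalue

lemma ostrogradskyEnergy_eq_zero (hinv : IsParameterInvariant ℓ)
    (hℓ : ContDiffAt ℝ 3 ↿ℓ (secondJet γ τ)) (hγ : ContDiffAt ℝ 4 γ τ) :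
    ostrogradskyEnergy ℓ γ τ = 0 := by
  have hγ' : ContDiffAt ℝ 3 (deriv γ) τ := hγ.derivWithin (by norm_num)
  have hQ ρ := ((contDiffAt_pAw_secondJet hℓ hγ ρ).differentiableAt two_ne_zero).hasDerivAt
  have hzermelo : (fun σ => ∑ ρ, deriv γ σ ρ * pAw ρ ℓ (γ σ) (deriv γ σ) (deriv (deriv γ) σ))
      =ᶠ[𝓝 τ] fun _ => 0 := by
    have hjet := (contDiffAt_secondJet (n := 2) (hγ.of_le (by norm_num))).continuousAt
    filter_upwards [hjet.eventually (hℓ.eventually (by simp))] with σ hσ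
    exact hinv.sum_mul_pAw (hσ.differentiableAt three_ne_zero)
  have hzermelo' := (HasDerivAt.fun_sum fun ρ (_ : ρ ∈ Finset.univ) =>
    (hasDerivAt_apply_of_contDiffAt three_ne_zero hγ' ρ).fun_mul (hQ ρ)).unique
    ((hasDerivAt_const τ (0 : ℝ)).congr_of_eventuallyEq hzermelo)
  rw [ostrogradskyEnergy, sub_eq_zero, ← hinv.sum_mul_pAu_add_two_mul_pAw
    (hℓ.differentiableAt three_ne_zero), ← sub_eq_zero, ← Finset.sum_sub_distrib,
    ← neg_eq_zero, ← Finset.sum_neg_distrib, ← hzermelo']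
  refine Finset.sum_congr rfl fun ρ _ => ?_
  rw [ostrogradskyMomentum]
  ring

theorem sum_deriv_mul_eulerLagrange (hinv : IsParameterInvariant ℓ)
    (hℓ : ContDiffAt ℝ 3 ↿ℓ (secondJet γ τ)) (hγ : ContDiffAt ℝ 4 γ τ) :
    ∑ ρ, deriv γ τ ρ * eulerLagrange ℓ γ τ ρ = 0 := by
  have hjet := (contDiffAt_secondJet (n := 2) (hγ.of_le (by norm_num))).continuousAt
  have henergy : ostrogradskyEnergy ℓ γ =ᶠ[𝓝 τ] fun _ => 0 := by
    filter_upwards [hjet.eventually (hℓ.eventually (by simp)), hγ.eventually (by simp)]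
      with σ hℓσ hγσ
    exact hinv.ostrogradskyEnergy_eq_zero hℓσ hγσ
  exact neg_eq_zero.1 ((hasDerivAt_ostrogradskyEnergy hℓ hγ).unique
    ((hasDerivAt_const τ 0).congr_of_eventuallyEq henergy))

end IsParameterInvariant

end Autonomous

section Parametric

variable {q : ℕ} {L : ℝ → (Fin q → ℝ) → (Fin q → ℝ) → (Fin q → ℝ) → ℝ}
  {x u w : Fin (q + 1) → ℝ} {γ : ℝ → Fin (q + 1) → ℝ} {c : ℝ → Fin q → ℝ} {τ : ℝ}

/-- The projection `℘` from parametrized jets `(x, u, u̇)` to graph jets `(t, x, v, v′)`. -/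
def graphJet (p : (Fin (q + 1) → ℝ) × (Fin (q + 1) → ℝ) × (Fin (q + 1) → ℝ)) :
    ℝ × (Fin q → ℝ) × (Fin q → ℝ) × (Fin q → ℝ) :=
  (p.1 0, Fin.tail p.1, fun a => p.2.1 a.succ / p.2.1 0,
    fun a => (p.2.2 a.succ * p.2.1 0 - p.2.1 a.succ * p.2.2 0) / p.2.1 0 ^ 3)

lemma paramLagrangian_eq_mul_graphJet :
    paramLagrangian L x u w = u 0 * ↿L (graphJet (x, u, w)) := rfl

lemma contDiffAt_graphJet {n : WithTop ℕ∞}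
    {p : (Fin (q + 1) → ℝ) × (Fin (q + 1) → ℝ) × (Fin (q + 1) → ℝ)} (hp : p.2.1 0 ≠ 0) :
    ContDiffAt ℝ n graphJet p := by
  unfold graphJet Fin.tail
  fun_prop (disch := first | assumption | exact pow_ne_zero 3 hp)

lemma contDiffAt_paramLagrangian {n : WithTop ℕ∞}
    {p : (Fin (q + 1) → ℝ) × (Fin (q + 1) → ℝ) × (Fin (q + 1) → ℝ)}
    (hL : ContDiffAt ℝ n ↿L (graphJet p)) (hp : p.2.1 0 ≠ 0) :
    ContDiffAt ℝ n ↿(paramLagrangian L) p := by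
  have htime : ContDiffAt ℝ n
      (fun p : (Fin (q + 1) → ℝ) × (Fin (q + 1) → ℝ) × (Fin (q + 1) → ℝ) => p.2.1 0) p := by
    fun_prop
  exact htime.mul (hL.comp p (contDiffAt_graphJet hp))

lemma isParameterInvariant_paramLagrangian : IsParameterInvariant (paramLagrangian L) := by
  intro x u w r k hr
  have hgraph : graphJet (x, r • u, r ^ 2 • w + k • u) = graphJet (x, u, w) := by
    simp only [graphJet, Pi.add_apply, Pi.smul_apply, smul_eq_mul, Prod.mk.injEq, true_and]
    refine ⟨funext fun a => mul_div_mul_left _ _ hr.ne', funext fun a => ?_⟩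
    rw [← mul_div_mul_left _ (u 0 ^ 3) (pow_ne_zero 3 hr.ne')]
    ring
  rw [paramLagrangian_eq_mul_graphJet, paramLagrangian_eq_mul_graphJet, hgraph, Pi.smul_apply,
    smul_eq_mul, mul_assoc]

section PartialDerivatives

variable {t : ℝ} {y v v' : Fin q → ℝ}

lemma pLx_eq_lineDeriv (a : Fin q) :
    pLx a L t y v v' = lineDeriv ℝ ↿L (t, y, v, v') (0, Pi.single a 1, 0, 0) := by
  simp [pLx, lineDeriv, Function.HasUncurry.uncurry]

lemma pLv_eq_lineDeriv (a : Fin q) :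
    pLv a L t y v v' = lineDeriv ℝ ↿L (t, y, v, v') (0, 0, Pi.single a 1, 0) := by
  simp [pLv, lineDeriv, Function.HasUncurry.uncurry]

lemma pLw_eq_lineDeriv (a : Fin q) :
    pLw a L t y v v' = lineDeriv ℝ ↿L (t, y, v, v') (0, 0, 0, Pi.single a 1) := by
  simp [pLw, lineDeriv, Function.HasUncurry.uncurry]

end PartialDerivatives

/- `℘` is affine along each spatial coordinate line of `x`, `u` or `u̇`. -/

lemma pAx_succ_paramLagrangian (a : Fin q) :
    pAx a.succ (paramLagrangian L) x u w =
      u 0 * lineDeriv ℝ ↿L (graphJet (x, u, w)) (0, Pi.single a 1, 0, 0) := by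
  have hline (s : ℝ) : graphJet (x + s • Pi.single a.succ 1, u, w) =
      graphJet (x, u, w) + s • (0, Pi.single a 1, 0, 0) := by
    ext i <;> simp [graphJet, Fin.tail, Pi.single_apply]
  simp only [pAx, paramLagrangian_eq_mul_graphJet, hline, deriv_const_mul_field', lineDeriv]

lemma pAu_succ_paramLagrangian (hL : DifferentiableAt ℝ ↿L (graphJet (x, u, w))) (hu : u 0 ≠ 0)
    (a : Fin q) :
    pAu a.succ (paramLagrangian L) x u w =
      lineDeriv ℝ ↿L (graphJet (x, u, w)) (0, 0, Pi.single a 1, 0)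
        - w 0 / u 0 ^ 2 * lineDeriv ℝ ↿L (graphJet (x, u, w)) (0, 0, 0, Pi.single a 1) := by
  have hline (s : ℝ) : graphJet (x, u + s • Pi.single a.succ 1, w) = graphJet (x, u, w)
      + s • ((u 0)⁻¹ • (0, 0, Pi.single a 1, 0) - (w 0 / u 0 ^ 3) • (0, 0, 0, Pi.single a 1)) := by
    ext i <;> simp [graphJet, Pi.single_apply] <;> split_ifs <;> ring
  have hderiv : pAu a.succ (paramLagrangian L) x u w = u 0 * lineDeriv ℝ ↿L (graphJet (x, u, w))
      ((u 0)⁻¹ • (0, 0, Pi.single a 1, 0) - (w 0 / u 0 ^ 3) • (0, 0, 0, Pi.single a 1)) := by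
    simp [pAu, paramLagrangian_eq_mul_graphJet, hline, lineDeriv]
  rw [hderiv]
  simp only [hL.lineDeriv_eq_fderiv, map_sub, map_smul, smul_eq_mul]
  field_simp

lemma pAw_succ_paramLagrangian (a : Fin q) :
    pAw a.succ (paramLagrangian L) x u w =
      (u 0)⁻¹ * lineDeriv ℝ ↿L (graphJet (x, u, w)) (0, 0, 0, Pi.single a 1) := by
  have hline (s : ℝ) : graphJet (x, u, w + s • Pi.single a.succ 1) = graphJet (x, u, w)
      + s • (u 0 / u 0 ^ 3) • (0, 0, 0, Pi.single a 1) := by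
    ext i <;> simp [graphJet, Pi.single_apply]
    split_ifs <;> ring
  have hderiv : pAw a.succ (paramLagrangian L) x u w = u 0 * lineDeriv ℝ ↿L (graphJet (x, u, w))
      ((u 0 / u 0 ^ 3) • (0, 0, 0, Pi.single a 1)) := by
    simp [pAw, paramLagrangian_eq_mul_graphJet, hline, lineDeriv]
  rw [hderiv, lineDeriv_smul, smul_eq_mul]
  field_simp

/-- `c` is, near time `γ⁰(τ)`, the curve whose graph is traced out by the parametrized curve `γ`
near `τ`. The order `4` is what the Euler–Lagrange expressions of a second-order problem require. -/
structure IsGraphParametrizationAt (γ : ℝ → Fin (q + 1) → ℝ) (c : ℝ → Fin q → ℝ) (τ : ℝ) :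
    Prop where
  contDiffAt : ContDiffAt ℝ 4 γ τ
  deriv_time_ne_zero : deriv γ τ 0 ≠ 0
  comp_time_eventuallyEq : (fun σ => c (γ σ 0)) =ᶠ[𝓝 τ] fun σ => Fin.tail (γ σ)

/-- The Ostrogradsky momentum `p_a = ∂L/∂v^a - d/dt (∂L/∂v′^a)` along the graph of a curve. -/
def graphMomentum (L : ℝ → (Fin q → ℝ) → (Fin q → ℝ) → (Fin q → ℝ) → ℝ) (c : ℝ → Fin q → ℝ)
    (a : Fin q) (t : ℝ) : ℝ :=
  pLv a L t (c t) (deriv c t) (deriv (deriv c) t)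
    - deriv (fun t => pLw a L t (c t) (deriv c t) (deriv (deriv c) t)) t

section GraphMomentum

variable {t : ℝ}

lemma contDiffAt_pLv_secondJet (hL : ContDiffAt ℝ 3 ↿L (t, secondJet c t))
    (hc : ContDiffAt ℝ 4 c t) (a : Fin q) :
    ContDiffAt ℝ 2 (fun t => pLv a L t (c t) (deriv c t) (deriv (deriv c) t)) t := by
  simp only [pLv_eq_lineDeriv]
  exact contDiffAt_lineDeriv_comp (j := fun t => (t, secondJet c t)) (hL.of_le (by norm_num))
    (contDiffAt_id.prodMk (contDiffAt_secondJet (hc.of_le (by norm_num)))) _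

lemma contDiffAt_pLw_secondJet (hL : ContDiffAt ℝ 3 ↿L (t, secondJet c t))
    (hc : ContDiffAt ℝ 4 c t) (a : Fin q) :
    ContDiffAt ℝ 2 (fun t => pLw a L t (c t) (deriv c t) (deriv (deriv c) t)) t := by
  simp only [pLw_eq_lineDeriv]
  exact contDiffAt_lineDeriv_comp (j := fun t => (t, secondJet c t)) (hL.of_le (by norm_num))
    (contDiffAt_id.prodMk (contDiffAt_secondJet (hc.of_le (by norm_num)))) _

lemma contDiffAt_graphMomentum (hL : ContDiffAt ℝ 3 ↿L (t, secondJet c t))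
    (hc : ContDiffAt ℝ 4 c t) (a : Fin q) : ContDiffAt ℝ 1 (graphMomentum L c a) t :=
  ((contDiffAt_pLv_secondJet hL hc a).of_le one_le_two).sub
    ((contDiffAt_pLw_secondJet hL hc a).derivWithin one_add_one_eq_two.le)

lemma eulerPoisson_eq_pLx_sub_deriv_graphMomentum (hL : ContDiffAt ℝ 3 ↿L (t, secondJet c t))
    (hc : ContDiffAt ℝ 4 c t) (a : Fin q) :
    eulerPoisson L c t a =
      pLx a L t (c t) (deriv c t) (deriv (deriv c) t) - deriv (graphMomentum L c a) t := by
  have hW' : ContDiffAt ℝ 1 (deriv fun t => pLw a L t (c t) (deriv c t) (deriv (deriv c) t)) t :=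
    (contDiffAt_pLw_secondJet hL hc a).derivWithin one_add_one_eq_two.le
  unfold eulerPoisson graphMomentum
  rw [deriv_fun_sub ((contDiffAt_pLv_secondJet hL hc a).differentiableAt two_ne_zero)
    (hW'.differentiableAt one_ne_zero)]
  ring

end GraphMomentum

namespace IsGraphParametrizationAt

lemma eventually (h : IsGraphParametrizationAt γ c τ) :
    ∀ᶠ σ in 𝓝 τ, IsGraphParametrizationAt γ c σ := by
  have hγ' : ContDiffAt ℝ 3 (deriv γ) τ := h.contDiffAt.derivWithin (by norm_num)
  have htime : ∀ᶠ σ in 𝓝 τ, deriv γ σ 0 ≠ 0 :=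
    (continuousAt_pi.1 hγ'.continuousAt 0).eventually_ne h.deriv_time_ne_zero
  filter_upwards [h.contDiffAt.eventually (by simp), htime,
    h.comp_time_eventuallyEq.eventuallyEq_nhds] with σ hγσ htimeσ hcσ
  exact ⟨hγσ, htimeσ, hcσ⟩

lemma hasDerivAt_time (h : IsGraphParametrizationAt γ c τ) :
    HasDerivAt (fun σ => γ σ 0) (deriv γ τ 0) τ :=
  hasDerivAt_apply_of_contDiffAt four_ne_zero h.contDiffAt 0

lemma contDiffAt_graph (h : IsGraphParametrizationAt γ c τ) : ContDiffAt ℝ 4 c (γ τ 0) := by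
  have hcoord := contDiffAt_pi.1 h.contDiffAt
  have htail : ContDiffAt ℝ 4 (fun σ => Fin.tail (γ σ)) τ :=
    contDiffAt_pi.2 fun a => hcoord a.succ
  exact contDiffAt_of_comp_of_deriv_ne_zero four_ne_zero (hcoord 0)
    (h.hasDerivAt_time.deriv ▸ h.deriv_time_ne_zero)
    (htail.congr_of_eventuallyEq h.comp_time_eventuallyEq)

lemma hasDerivAt_comp_time {E : Type*} [NormedAddCommGroup E] [NormedSpace ℝ E] {f : ℝ → E}
    (h : IsGraphParametrizationAt γ c τ) (hf : DifferentiableAt ℝ f (γ τ 0)) :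
    HasDerivAt (fun σ => f (γ σ 0)) (deriv γ τ 0 • deriv f (γ τ 0)) τ :=
  hf.hasDerivAt.scomp τ h.hasDerivAt_time

lemma deriv_graph (h : IsGraphParametrizationAt γ c τ) :
    deriv c (γ τ 0) = fun a => deriv γ τ a.succ / deriv γ τ 0 := by
  have htail : HasDerivAt (fun σ => Fin.tail (γ σ)) (Fin.tail (deriv γ τ)) τ :=
    hasDerivAt_pi.2 fun a => hasDerivAt_apply_of_contDiffAt four_ne_zero h.contDiffAt a.succ
  have hchain : deriv γ τ 0 • deriv c (γ τ 0) = Fin.tail (deriv γ τ) :=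
    (h.hasDerivAt_comp_time (h.contDiffAt_graph.differentiableAt four_ne_zero)).unique
      (htail.congr_of_eventuallyEq h.comp_time_eventuallyEq)
  funext a
  rw [eq_div_iff h.deriv_time_ne_zero, mul_comm]
  exact congrFun hchain a

lemma deriv_deriv_graph (h : IsGraphParametrizationAt γ c τ) :
    deriv (deriv c) (γ τ 0) = fun a => (deriv (deriv γ) τ a.succ * deriv γ τ 0
      - deriv γ τ a.succ * deriv (deriv γ) τ 0) / deriv γ τ 0 ^ 3 := by
  have hγ' : ContDiffAt ℝ 3 (deriv γ) τ := h.contDiffAt.derivWithin (by norm_num)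
  have hc' : ContDiffAt ℝ 3 (deriv c) (γ τ 0) := h.contDiffAt_graph.derivWithin (by norm_num)
  have hcoord := hasDerivAt_apply_of_contDiffAt three_ne_zero hγ'
  have hvelocity : HasDerivAt (fun σ (a : Fin q) => deriv γ σ a.succ / deriv γ σ 0)
      (fun a => (deriv (deriv γ) τ a.succ * deriv γ τ 0
        - deriv γ τ a.succ * deriv (deriv γ) τ 0) / deriv γ τ 0 ^ 2) τ :=
    hasDerivAt_pi.2 fun a => (hcoord a.succ).fun_div (hcoord 0) h.deriv_time_ne_zero
  have hchain := (h.hasDerivAt_comp_time (hc'.differentiableAt three_ne_zero)).unique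
    (hvelocity.congr_of_eventuallyEq (h.eventually.mono fun _ hσ => hσ.deriv_graph))
  funext a
  have hchain_a : deriv γ τ 0 * deriv (deriv c) (γ τ 0) a = _ := congrFun hchain a
  have htime := h.deriv_time_ne_zero
  field_simp at hchain_a ⊢
  linear_combination hchain_a

lemma graphJet_secondJet (h : IsGraphParametrizationAt γ c τ) :
    graphJet (secondJet γ τ) = (γ τ 0, secondJet c (γ τ 0)) := by
  simp only [graphJet, secondJet, h.deriv_graph, h.deriv_deriv_graph,
    h.comp_time_eventuallyEq.eq_of_nhds]

lemma eventually_contDiffAt_graphJet (h : IsGraphParametrizationAt γ c τ)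
    (hL : ContDiffAt ℝ 3 ↿L (graphJet (secondJet γ τ))) :
    ∀ᶠ σ in 𝓝 τ, ContDiffAt ℝ 3 ↿L (graphJet (secondJet γ σ)) := by
  have hjet := (contDiffAt_secondJet (n := 2) (h.contDiffAt.of_le (by norm_num))).continuousAt
  have hgraph : ContinuousAt graphJet (secondJet γ τ) :=
    (contDiffAt_graphJet (n := 0) h.deriv_time_ne_zero).continuousAt
  exact (hgraph.comp hjet).eventually (hL.eventually (by simp))

lemma ostrogradskyMomentum_succ (h : IsGraphParametrizationAt γ c τ)
    (hL : ContDiffAt ℝ 3 ↿L (graphJet (secondJet γ τ))) (a : Fin q) :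
    ostrogradskyMomentum (paramLagrangian L) γ a.succ τ = graphMomentum L c a (γ τ 0) := by
  have hγ' : ContDiffAt ℝ 3 (deriv γ) τ := h.contDiffAt.derivWithin (by norm_num)
  set W : ℝ → ℝ := fun t => pLw a L t (c t) (deriv c t) (deriv (deriv c) t) with hW
  have hW_diff : DifferentiableAt ℝ W (γ τ 0) :=
    (contDiffAt_pLw_secondJet (h.graphJet_secondJet ▸ hL) h.contDiffAt_graph a).differentiableAt
      two_ne_zero
  have hQ : (fun σ => pAw a.succ (paramLagrangian L) (γ σ) (deriv γ σ) (deriv (deriv γ) σ))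
      =ᶠ[𝓝 τ] fun σ => (deriv γ σ 0)⁻¹ * W (γ σ 0) := by
    filter_upwards [h.eventually] with σ hσ
    rw [pAw_succ_paramLagrangian, ← secondJet, hσ.graphJet_secondJet, secondJet,
      ← pLw_eq_lineDeriv]
  have hQ' := ((hasDerivAt_apply_of_contDiffAt three_ne_zero hγ' 0).fun_inv
    h.deriv_time_ne_zero).fun_mul (h.hasDerivAt_comp_time hW_diff)
  have hP := pAu_succ_paramLagrangian (hL.differentiableAt three_ne_zero) h.deriv_time_ne_zero a
  rw [← secondJet, h.graphJet_secondJet, secondJet, ← pLw_eq_lineDeriv, ← pLv_eq_lineDeriv] at hP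
  rw [ostrogradskyMomentum, graphMomentum, hQ.deriv_eq, hQ'.deriv, hP, ← hW, smul_eq_mul,
    inv_mul_cancel_left₀ h.deriv_time_ne_zero]
  ring

theorem eulerLagrange_succ (h : IsGraphParametrizationAt γ c τ)
    (hL : ContDiffAt ℝ 3 ↿L (graphJet (secondJet γ τ))) (a : Fin q) :
    eulerLagrange (paramLagrangian L) γ τ a.succ
      = deriv γ τ 0 * eulerPoisson L c (γ τ 0) a := by
  have hL_graph : ContDiffAt ℝ 3 ↿L (γ τ 0, secondJet c (γ τ 0)) := h.graphJet_secondJet ▸ hL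
  have hmomentum : ostrogradskyMomentum (paramLagrangian L) γ a.succ
      =ᶠ[𝓝 τ] fun σ => graphMomentum L c a (γ σ 0) := by
    filter_upwards [h.eventually, h.eventually_contDiffAt_graphJet hL] with σ hσ hLσ
    exact hσ.ostrogradskyMomentum_succ hLσ a
  have hchain := h.hasDerivAt_comp_time
    ((contDiffAt_graphMomentum hL_graph h.contDiffAt_graph a).differentiableAt one_ne_zero)
  rw [eulerLagrange_eq_pAx_sub_deriv_ostrogradskyMomentum
      (contDiffAt_paramLagrangian hL h.deriv_time_ne_zero) h.contDiffAt,
    eulerPoisson_eq_pLx_sub_deriv_graphMomentum hL_graph h.contDiffAt_graph,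
    hmomentum.deriv_eq, hchain.deriv, pAx_succ_paramLagrangian, ← secondJet,
    h.graphJet_secondJet, secondJet, ← pLx_eq_lineDeriv, smul_eq_mul, mul_sub]

theorem eulerLagrange_zero (h : IsGraphParametrizationAt γ c τ)
    (hL : ContDiffAt ℝ 3 ↿L (graphJet (secondJet γ τ))) :
    eulerLagrange (paramLagrangian L) γ τ 0
      = -∑ a : Fin q, deriv γ τ a.succ * eulerPoisson L c (γ τ 0) a := by
  have hnoether := isParameterInvariant_paramLagrangian.sum_deriv_mul_eulerLagrange
    (contDiffAt_paramLagrangian hL h.deriv_time_ne_zero) h.contDiffAt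
  simp only [Fin.sum_univ_succ, h.eulerLagrange_succ hL, mul_left_comm _ (deriv γ τ 0)] at hnoether
  rw [← Finset.mul_sum, ← mul_add] at hnoether
  exact eq_neg_of_add_eq_zero_left
    ((mul_eq_zero.1 hnoether).resolve_left h.deriv_time_ne_zero)

end IsGraphParametrizationAt

end Parametric

theorem parametric_eulerLagrange_correspondence_general {q : ℕ}
    {L : ℝ → (Fin q → ℝ) → (Fin q → ℝ) → (Fin q → ℝ) → ℝ} {γ : ℝ → Fin (q + 1) → ℝ}
    {c : ℝ → Fin q → ℝ} {τ : ℝ} (hL : ContDiffAt ℝ 3 ↿L (graphJet (secondJet γ τ)))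
    (hγc : IsGraphParametrizationAt γ c τ) :
    (∀ a : Fin q,
      eulerLagrange (paramLagrangian L) γ τ a.succ
        = deriv γ τ 0 * eulerPoisson L c (γ τ 0) a) ∧
    eulerLagrange (paramLagrangian L) γ τ 0
      = -∑ a : Fin q, deriv γ τ a.succ * eulerPoisson L c (γ τ 0) a :=
  ⟨hγc.eulerLagrange_succ hL, hγc.eulerLagrange_zero hL⟩

/-- Correspondence between a variational problem and its parametric
counterpart (equations (29)–(30)): along a curve `γ = (x⁰, 𝐱)` with `ẋ⁰ > 0`, the
Euler–Lagrange expressions of `ℒ = u⁰ (L ∘ ℘)` are `𝓔_a = ẋ⁰ · (E_a[L,c] ∘ x⁰)` and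
`𝓔₀ = − Σ_a ẋ^a · (E_a[L,c] ∘ x⁰)`, where `c = 𝐱 ∘ φ` is the reparametrization of the
spatial part by the time `t = x⁰(τ)`, `φ` being the inverse function of `x⁰`. -/
theorem parametric_eulerLagrange_correspondence {q : ℕ} (hq : 1 ≤ q)
    (L : ℝ → (Fin q → ℝ) → (Fin q → ℝ) → (Fin q → ℝ) → ℝ)
    (hL : ContDiff ℝ (⊤ : ℕ∞)
      (fun p : ℝ × (Fin q → ℝ) × (Fin q → ℝ) × (Fin q → ℝ) =>
        L p.1 p.2.1 p.2.2.1 p.2.2.2))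
    (γ : ℝ → (Fin (q + 1) → ℝ)) (hγ : ContDiff ℝ (⊤ : ℕ∞) γ)
    (hpos : ∀ τ : ℝ, 0 < deriv γ τ 0)
    (φ : ℝ → ℝ) (hφ : ∀ τ : ℝ, φ (γ τ 0) = τ)
    (c : ℝ → (Fin q → ℝ)) (hc : c = fun t => fun a : Fin q => γ (φ t) a.succ) :
    ∀ τ : ℝ,
      (∀ a : Fin q,
        eulerLagrange (paramLagrangian L) γ τ a.succ
          = deriv γ τ 0 * eulerPoisson L c (γ τ 0) a) ∧
      eulerLagrange (paramLagrangian L) γ τ 0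
        = - ∑ a : Fin q, deriv γ τ a.succ * eulerPoisson L c (γ τ 0) a := by
  have hcγ (σ : ℝ) : c (γ σ 0) = Fin.tail (γ σ) := by
    simp only [hc, hφ, Fin.tail_def]
  exact fun τ => parametric_eulerLagrange_correspondence_general
    (contDiff_infty.1 hL 3).contDiffAt
    ⟨(contDiff_infty.1 hγ 4).contDiffAt, (hpos τ).ne', .of_forall hcγ⟩

end
end
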